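/- arXiv:1902.06404 — 2 statements merged into one kernel-verified Lean document; each statement's English description precedes it below -/
import Mathlib

section
/- In the two-state i.i.d. model, if m(n) = ⌈c·n^{2+α}⌉ and l(n) = ⌈c'·n^{2+α}⌉ for some constants c > 0, c' > 0 and α > 0, then user 1 has no privacy at every time k ∈ {1, …, m}: the infimum, over all estimators X̃_1(k) that are measurable functions of (W, Y), of the error probability P(X̃_1(k) ≠ X_1(k)) tends to 0 as n → ∞. -/
open MeasureTheory ProbabilityTheory Filter
open scoped ENNReal NNReal

/-- Bernoulli measure on `Bool` with success probability `p`. -/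
noncomputable def bern (p : ℝ) : Measure Bool :=
  ENNReal.ofReal p • Measure.dirac true + ENNReal.ofReal (1 - p) • Measure.dirac false

/-- Joint law of (parameters, actual traces, training traces) in the two-state i.i.d. model:
the parameters `p u` are i.i.d. with law `μP`, and conditionally on the parameters the
`n` actual traces (of length `m`) and training traces (of length `l`) consist of i.i.d.
`Bernoulli (p u)` samples, all mutually independent. -/
noncomputable def twoStateLaw (n m l : ℕ) (μP : Measure ℝ) :
    Measure ((Fin n → ℝ) × (Fin n → Fin m → Bool) × (Fin n → Fin l → Bool)) :=
  (Measure.pi fun _ : Fin n => μP).bind fun p =>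
    (Measure.dirac p).prod
      ((Measure.pi fun u : Fin n => Measure.pi fun _ : Fin m => bern (p u)).prod
        (Measure.pi fun u : Fin n => Measure.pi fun _ : Fin l => bern (p u)))

/-! The adversary assigns to user 1 the anonymized trace whose frequency of ones is closest to that
of user 1's training trace. Fix `ε > 0` and put `t = ε / n`. Hoeffding's inequality bounds the
probability that one of the `n + 1` frequencies involved is off its parameter by `t` or more by
`2 n exp (-2 m t²) + 2 exp (-2 l t²)`, which vanishes because `m` grows faster than `n² log n` and
`l` faster than `n²`. When all of them are within `t`, the closest trace can belong to another user
only if that user's parameter is within `4 t` of user 1's, and as the density is at most `δ₂`, some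
such user exists with probability at most `n · 8 δ₂ t = 8 δ₂ ε`. Since `ε` is arbitrary, the error
probability tends to zero. -/

open Asymptotics Set
open scoped Topology

/-! ### Two-sided Hoeffding inequality -/

section Hoeffding

variable {Ω ι : Type*} {mΩ : MeasurableSpace Ω} {μ : Measure Ω}

lemma measureReal_le_abs_le_of_hasSubgaussianMGF {X : Ω → ℝ} {c : ℝ≥0}
    (hX : HasSubgaussianMGF X c μ) {ε : ℝ} (hε : 0 ≤ ε) :
    μ.real {ω | ε ≤ |X ω|} ≤ 2 * Real.exp (-ε ^ 2 / (2 * c)) := by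
  have : IsFiniteMeasure μ := by
    simpa [integrable_const_iff] using hX.integrable_exp_mul 0
  have hsplit : {ω | ε ≤ |X ω|} = {ω | ε ≤ X ω} ∪ {ω | ε ≤ (-X) ω} := by
    ext ω; simp [le_abs]
  calc μ.real {ω | ε ≤ |X ω|}
      ≤ μ.real {ω | ε ≤ X ω} + μ.real {ω | ε ≤ (-X) ω} := hsplit ▸ measureReal_union_le _ _
    _ ≤ Real.exp (-ε ^ 2 / (2 * c)) + Real.exp (-ε ^ 2 / (2 * c)) :=
        add_le_add (hX.measure_ge_le hε) (hX.neg.measure_ge_le hε)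
    _ = 2 * Real.exp (-ε ^ 2 / (2 * c)) := (two_mul _).symm

lemma measureReal_le_abs_sum_sub_integral_le [IsProbabilityMeasure μ] {X : ι → Ω → ℝ}
    (hindep : iIndepFun X μ) (hX : ∀ i, AEMeasurable (X i) μ) {a b : ℝ}
    (hab : ∀ i, ∀ᵐ ω ∂μ, X i ω ∈ Icc a b) (s : Finset ι) {ε : ℝ} (hε : 0 ≤ ε) :
    μ.real {ω | ε ≤ |∑ i ∈ s, (X i ω - μ[X i])|} ≤
      2 * Real.exp (-2 * ε ^ 2 / (s.card * (b - a) ^ 2)) := by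
  have hcentered : iIndepFun (fun i ω => X i ω - μ[X i]) μ :=
    hindep.comp (fun (i : ι) (x : ℝ) => x - ∫ ω, X i ω ∂μ) fun _ => measurable_id.sub_const _
  have hsum := HasSubgaussianMGF.sum_of_iIndepFun hcentered (s := s)
    fun i _ => hasSubgaussianMGF_of_mem_Icc (hX i) (hab i)
  refine (measureReal_le_abs_le_of_hasSubgaussianMGF hsum hε).trans_eq ?_
  congr 2
  simp only [Finset.sum_const, nsmul_eq_mul, NNReal.coe_mul, NNReal.coe_natCast, NNReal.coe_pow,
    NNReal.coe_div, coe_nnnorm, NNReal.coe_ofNat, div_pow, Real.norm_eq_abs, sq_abs]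
  field_simp

end Hoeffding

/-! ### Bernoulli traces -/

lemma bern_eq_bernoulliMeasure (p : unitInterval) : bern p = bernoulliMeasure true false p := by
  have ofReal_eq (q : unitInterval) : ENNReal.ofReal q = unitInterval.toNNReal q :=
    ENNReal.ofReal_eq_coe_nnreal q.2.1
  have ofReal_symm_eq := ofReal_eq (unitInterval.symm p)
  rw [unitInterval.coe_symm_eq] at ofReal_symm_eq
  rw [bern, bernoulliMeasure_def, ofReal_eq, ofReal_symm_eq]
  rfl

instance (p : unitInterval) : IsProbabilityMeasure (bern p) := by
  rw [bern_eq_bernoulliMeasure]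
  infer_instance

instance (p : ℝ) : IsFiniteMeasure (bern p) := by
  constructor
  simp [bern]

/-- The fraction of `true` entries of a trace, the adversary's estimate of the user's parameter. -/
noncomputable def successFreq {ι : Type*} [Fintype ι] (x : ι → Bool) : ℝ :=
  (∑ i, if x i then 1 else 0) / Fintype.card ι

lemma card_mul_successFreq_sub {ι : Type*} [Fintype ι] (x : ι → Bool) (p : ℝ) :
    Fintype.card ι * (successFreq x - p) = ∑ i, ((if x i then 1 else 0) - p) := by
  rcases isEmpty_or_nonempty ι with _ | _
  · simp
  · simp only [successFreq, Finset.sum_sub_distrib, Finset.sum_const, Finset.card_univ,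
      nsmul_eq_mul]
    field_simp

lemma pi_bern_le_dist_successFreq_le {ι : Type*} [Fintype ι] (p : unitInterval) {t : ℝ}
    (ht : 0 ≤ t) :
    (Measure.pi fun _ : ι => bern p) {x | t ≤ dist (successFreq x) p} ≤
      ENNReal.ofReal (2 * Real.exp (-2 * Fintype.card ι * t ^ 2)) := by
  set N := (Fintype.card ι : ℝ) with hN
  let X (b : Bool) : ℝ := if b then 1 else 0
  have integral_X (i : ι) : ∫ x, X (x i) ∂(Measure.pi fun _ : ι => bern p) = p := by
    rw [integral_comp_eval (μ := fun _ : ι => bern p) (f := X)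
      Measurable.of_discrete.aestronglyMeasurable, bern_eq_bernoulliMeasure,
      integral_bernoulliMeasure]
    simp [X]
  have hoeffding := measureReal_le_abs_sum_sub_integral_le
    (iIndepFun_pi (μ := fun _ : ι => bern p) (X := fun _ => X)
      fun _ => Measurable.of_discrete.aemeasurable)
    (fun _ => Measurable.of_discrete.aemeasurable) (a := 0) (b := 1)
    (fun i => ae_of_all _ fun x => by cases x i <;> simp [X]) Finset.univ
    (ε := N * t) (by positivity)
  rw [← ofReal_measureReal]
  refine ENNReal.ofReal_le_ofReal ((measureReal_mono fun x hx => ?_).trans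
    (hoeffding.trans_eq ?_))
  · simp only [mem_ofPred_eq, integral_X, X, ← card_mul_successFreq_sub, abs_mul, ← hN,
      abs_of_nonneg (show 0 ≤ N by positivity)]
    exact mul_le_mul_of_nonneg_left hx (by positivity)
  · simp only [Finset.card_univ, ← hN, sub_zero, one_pow, mul_one]
    congr 2
    field_simp

/-! ### Union bounds for product measures -/

lemma pi_exists_mem_le {ι : Type*} [Fintype ι] {α : ι → Type*} [∀ i, MeasurableSpace (α i)]
    (ν : ∀ i, Measure (α i)) [∀ i, IsProbabilityMeasure (ν i)] (s : ∀ i, Set (α i)) :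
    Measure.pi ν {x | ∃ i, x i ∈ s i} ≤ ∑ i, ν i (s i) := by
  rw [ofPred_exists]
  refine (measure_iUnion_fintype_le _ _).trans (Finset.sum_le_sum fun i _ => ?_)
  have heval := measurePreserving_eval ν i
  exact (Measure.le_map_apply heval.aemeasurable _).trans_eq (by rw [heval.map_eq])

lemma measurePreserving_eval_pair {ι : Type*} [Fintype ι] {α : ι → Type*}
    [∀ i, MeasurableSpace (α i)] (ν : ∀ i, Measure (α i)) [∀ i, IsProbabilityMeasure (ν i)]
    {i j : ι} (hij : i ≠ j) :
    MeasurePreserving (fun x => (x i, x j)) (Measure.pi ν) ((ν i).prod (ν j)) := by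
  have hi := measurePreserving_eval ν i
  have hj := measurePreserving_eval ν j
  have hindep : IndepFun (Function.eval i) (Function.eval j) (Measure.pi ν) :=
    (iIndepFun_pi (X := fun _ => id) fun _ => aemeasurable_id).indepFun hij
  refine ⟨hi.measurable.prodMk hj.measurable, ?_⟩
  rw [← hi.map_eq, ← hj.map_eq]
  exact (indepFun_iff_map_prod_eq_prod_map_map hi.aemeasurable hj.aemeasurable).1 hindep

/-- The point `p z` is at distance at least `r` from every other point of the family `p`. -/
def SeparatedFrom {ι E : Type*} [PseudoMetricSpace E] (r : ℝ) (z : ι) (p : ι → E) : Prop :=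
  ∀ u, u ≠ z → r ≤ dist (p u) (p z)

lemma setOf_not_separatedFrom {ι E : Type*} [PseudoMetricSpace E] (r : ℝ) (z : ι) :
    {p : ι → E | ¬ SeparatedFrom r z p} =
      ⋃ u : {u // u ≠ z}, {p | dist (p u) (p z) < r} := by
  ext p
  simp [SeparatedFrom]

section Separation

variable {E : Type*} [PseudoMetricSpace E] [MeasurableSpace E] [OpensMeasurableSpace E]
  [SecondCountableTopology E] {μ ν : Measure E} {r : ℝ} {ε : ℝ≥0∞}

lemma prod_dist_lt_le [IsProbabilityMeasure ν] [SFinite μ] (hμ : ∀ x, μ (Metric.ball x r) ≤ ε) :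
    (ν.prod μ) {q | dist q.2 q.1 < r} ≤ ε := by
  rw [Measure.prod_apply (measurableSet_lt (by fun_prop) measurable_const)]
  calc ∫⁻ x, μ (Metric.ball x r) ∂ν ≤ ∫⁻ _, ε ∂ν := lintegral_mono hμ
    _ = ε := by simp

lemma pi_dist_lt_le {ι : Type*} [Fintype ι] [IsProbabilityMeasure μ]
    (hμ : ∀ x, μ (Metric.ball x r) ≤ ε) {u z : ι} (huz : u ≠ z) :
    (Measure.pi fun _ : ι => μ) {p | dist (p u) (p z) < r} ≤ ε := by
  have hpair := measurePreserving_eval_pair (fun _ : ι => μ) huz.symm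
  calc (Measure.pi fun _ : ι => μ) {p | dist (p u) (p z) < r}
      ≤ (Measure.pi fun _ : ι => μ).map (fun p => (p z, p u)) {q | dist q.2 q.1 < r} :=
        Measure.le_map_apply hpair.aemeasurable _
    _ ≤ ε := hpair.map_eq ▸ prod_dist_lt_le hμ

lemma measurableSet_not_separatedFrom {ι : Type*} [Countable ι] (r : ℝ) (z : ι) :
    MeasurableSet {p : ι → E | ¬ SeparatedFrom r z p} := by
  rw [setOf_not_separatedFrom]
  exact .iUnion fun u => measurableSet_lt (by fun_prop) measurable_const

lemma pi_not_separatedFrom_le {ι : Type*} [Fintype ι] [IsProbabilityMeasure μ]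
    (hμ : ∀ x, μ (Metric.ball x r) ≤ ε) (z : ι) :
    (Measure.pi fun _ : ι => μ) {p | ¬ SeparatedFrom r z p} ≤ Fintype.card ι * ε := by
  classical
  rw [setOf_not_separatedFrom]
  calc (Measure.pi fun _ : ι => μ) (⋃ u : {u // u ≠ z}, {p | dist (p u) (p z) < r})
      ≤ ∑ u : {u // u ≠ z}, (Measure.pi fun _ : ι => μ) {p | dist (p u) (p z) < r} :=
        measure_iUnion_fintype_le _ _
    _ ≤ ∑ _u : {u // u ≠ z}, ε := Finset.sum_le_sum fun u _ => pi_dist_lt_le hμ u.2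
    _ = Fintype.card {u // u ≠ z} * ε := by simp
    _ ≤ Fintype.card ι * ε := by gcongr; exact Fintype.card_subtype_le _

end Separation

/-! ### The joint law of parameters and traces -/

section TwoStateLaw

variable {n m l : ℕ} {μP : Measure ℝ}

/-- The conditional law of the actual and training traces given the parameters `p`. -/
noncomputable def traceLaw (n m l : ℕ) (p : Fin n → ℝ) :
    Measure ((Fin n → Fin m → Bool) × (Fin n → Fin l → Bool)) :=
  (Measure.pi fun u => Measure.pi fun _ => bern (p u)).prod
    (Measure.pi fun u => Measure.pi fun _ => bern (p u))

instance (p : Fin n → ℝ) : IsFiniteMeasure (traceLaw n m l p) := by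
  unfold traceLaw; infer_instance

instance (p : Fin n → unitInterval) : IsProbabilityMeasure (traceLaw n m l fun u => p u) := by
  unfold traceLaw; infer_instance

lemma twoStateLaw_apply_le
    {s : Set ((Fin n → ℝ) × (Fin n → Fin m → Bool) × (Fin n → Fin l → Bool))}
    (hs : MeasurableSet s) :
    twoStateLaw n m l μP s ≤
      ∫⁻ p, traceLaw n m l p (Prod.mk p ⁻¹' s) ∂(Measure.pi fun _ => μP) := by
  refine (Measure.bind_apply_le _ hs).trans_eq (lintegral_congr fun p => ?_)
  change ((Measure.dirac p).prod (traceLaw n m l p)) s = _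
  rw [Measure.dirac_prod, Measure.map_apply measurable_prodMk_left hs]

lemma ae_pi_exists_eq_unitInterval [IsProbabilityMeasure μP]
    (h01 : ∀ᵐ x ∂μP, x ∈ unitInterval) :
    ∀ᵐ p ∂(Measure.pi fun _ : Fin n => μP), ∃ q : Fin n → unitInterval, p = fun u => ↑(q u) := by
  have hall : ∀ᵐ p ∂(Measure.pi fun _ : Fin n => μP), ∀ u, p u ∈ unitInterval :=
    eventually_all.2 fun u => Measure.tendsto_eval_ae_ae.eventually h01
  filter_upwards [hall] with p hp
  exact ⟨fun u => ⟨p u, hp u⟩, rfl⟩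

lemma twoStateLaw_le_of_forall_traceLaw_le [IsProbabilityMeasure μP]
    (h01 : ∀ᵐ x ∂μP, x ∈ unitInterval)
    {s : Set ((Fin n → ℝ) × (Fin n → Fin m → Bool) × (Fin n → Fin l → Bool))}
    (hs : MeasurableSet s) {C : ℝ≥0∞}
    (hC : ∀ p : Fin n → unitInterval,
      traceLaw n m l (fun u => p u) (Prod.mk (fun u => (p u : ℝ)) ⁻¹' s) ≤ C) :
    twoStateLaw n m l μP s ≤ C := by
  calc twoStateLaw n m l μP s
      ≤ ∫⁻ p, traceLaw n m l p (Prod.mk p ⁻¹' s) ∂(Measure.pi fun _ => μP) :=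
        twoStateLaw_apply_le hs
    _ ≤ ∫⁻ _, C ∂(Measure.pi fun _ : Fin n => μP) := by
        refine lintegral_mono_ae ?_
        filter_upwards [ae_pi_exists_eq_unitInterval h01]
        rintro _ ⟨p, rfl⟩
        exact hC p
    _ = C := by simp

lemma twoStateLaw_fst_preimage_le [IsProbabilityMeasure μP] (h01 : ∀ᵐ x ∂μP, x ∈ unitInterval)
    {s : Set (Fin n → ℝ)} (hs : MeasurableSet s) :
    twoStateLaw n m l μP (Prod.fst ⁻¹' s) ≤ (Measure.pi fun _ => μP) s := by
  calc twoStateLaw n m l μP (Prod.fst ⁻¹' s)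
      ≤ ∫⁻ p, traceLaw n m l p (Prod.mk p ⁻¹' (Prod.fst ⁻¹' s)) ∂(Measure.pi fun _ => μP) :=
        twoStateLaw_apply_le (measurable_fst hs)
    _ ≤ ∫⁻ p, s.indicator 1 p ∂(Measure.pi fun _ => μP) := by
        refine lintegral_mono_ae ?_
        filter_upwards [ae_pi_exists_eq_unitInterval h01]
        rintro _ ⟨p, rfl⟩
        by_cases hp : (fun u => (p u : ℝ)) ∈ s
        · simpa [hp] using prob_le_one
        · simp [preimage, hp]
    _ = (Measure.pi fun _ => μP) s := lintegral_indicator_one hs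

end TwoStateLaw

/-! ### Recovering the target's trace -/

lemma eq_of_dist_le_of_separatedFrom {ι E : Type*} [PseudoMetricSpace E] {p a : ι → E} {b : E}
    {t : ℝ} {u z : ι} (ha : ∀ v, dist (a v) (p v) < t) (hb : dist b (p z) < t)
    (hp : SeparatedFrom (4 * t) z p) (hu : dist b (a u) ≤ dist b (a z)) : u = z := by
  by_contra huz
  have hbz : dist b (a z) ≤ dist b (p z) + dist (a z) (p z) := dist_triangle_right _ _ _
  have hpu : dist (p u) (p z) ≤ dist (a u) (p u) + dist b (a u) + dist b (p z) := by
    simpa only [dist_comm] using dist_triangle4 (p u) (a u) b (p z)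
  linarith [hp u huz, ha u, ha z]

section Recovery

variable {n m l : ℕ}

/-- All success frequencies the attack on user `z` relies on, those of the actual traces and that
of the training trace of `z`, are within `t` of the true parameters. -/
def AccurateWithin (t : ℝ) (z : Fin n) (p : Fin n → ℝ) (x : Fin n → Fin m → Bool)
    (w : Fin n → Fin l → Bool) : Prop :=
  (∀ u, dist (successFreq (x u)) (p u) < t) ∧ dist (successFreq (w z)) (p z) < t

lemma exists_estimator_eq_of_accurateWithin (m l : ℕ) (z : Fin n) :
    ∃ g : (Fin n → Fin l → Bool) × (Fin n → Fin m → Bool) → Fin m → Bool,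
      ∀ ⦃t p x w⦄ (σ : Equiv.Perm (Fin n)), AccurateWithin t z p x w →
        SeparatedFrom (4 * t) z p → g (w, fun v => x (σ.symm v)) = x z := by
  have : Nonempty (Fin n) := ⟨z⟩
  choose nearest hnearest using fun y : (Fin n → Fin l → Bool) × (Fin n → Fin m → Bool) =>
    Finite.exists_min fun v => dist (successFreq (y.1 z)) (successFreq (y.2 v))
  refine ⟨fun y => y.2 (nearest y), fun t p x w σ hacc hsep => ?_⟩
  have hle := hnearest (w, fun v => x (σ.symm v)) (σ z)
  simp only [Equiv.symm_apply_apply] at hle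
  exact congrArg x (eq_of_dist_le_of_separatedFrom hacc.1 hacc.2 hsep hle)

lemma measurableSet_not_accurateWithin (t : ℝ) (z : Fin n) :
    MeasurableSet {q : (Fin n → ℝ) × (Fin n → Fin m → Bool) × (Fin n → Fin l → Bool) |
      ¬ AccurateWithin t z q.1 q.2.1 q.2.2} := by
  have hfreq (N : ℕ) : Measurable (successFreq : (Fin N → Bool) → ℝ) := .of_discrete
  unfold AccurateWithin
  measurability

lemma traceLaw_not_accurateWithin_le (p : Fin n → unitInterval) (z : Fin n) {t : ℝ}
    (ht : 0 ≤ t) :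
    traceLaw n m l (fun u => p u) {y | ¬ AccurateWithin t z (fun u => p u) y.1 y.2} ≤
      ENNReal.ofReal (n * (2 * Real.exp (-2 * m * t ^ 2)) + 2 * Real.exp (-2 * l * t ^ 2)) := by
  let νX := Measure.pi fun u => Measure.pi fun _ : Fin m => bern (p u)
  let νW := Measure.pi fun u => Measure.pi fun _ : Fin l => bern (p u)
  let badX := {x : Fin n → Fin m → Bool | ∃ u, x u ∈ {y | t ≤ dist (successFreq y) (p u)}}
  let badW := {w : Fin n → Fin l → Bool | w z ∈ {y | t ≤ dist (successFreq y) (p z)}}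
  have hX : νX badX ≤ ENNReal.ofReal (n * (2 * Real.exp (-2 * m * t ^ 2))) := by
    refine (pi_exists_mem_le _ _).trans
      ((Finset.sum_le_sum fun u _ => pi_bern_le_dist_successFreq_le (p u) ht).trans_eq ?_)
    rw [Finset.sum_const, Finset.card_univ, Fintype.card_fin, Fintype.card_fin, nsmul_eq_mul,
      ENNReal.ofReal_mul n.cast_nonneg, ENNReal.ofReal_natCast]
  have hW : νW badW ≤ ENNReal.ofReal (2 * Real.exp (-2 * l * t ^ 2)) := by
    refine ((measurePreserving_eval _ z).measure_preimage
      (MeasurableSet.of_discrete.nullMeasurableSet)).trans_le ?_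
    simpa using pi_bern_le_dist_successFreq_le (ι := Fin l) (p z) ht
  have hsub : {y : (Fin n → Fin m → Bool) × (Fin n → Fin l → Bool) |
      ¬ AccurateWithin t z (fun u => p u) y.1 y.2} ⊆ badX ×ˢ univ ∪ univ ×ˢ badW := by
    intro y hy
    rw [mem_ofPred_eq, AccurateWithin, not_and_or, not_forall] at hy
    simp only [not_lt] at hy
    exact hy.imp (⟨·, mem_univ _⟩) (⟨mem_univ _, ·⟩)
  rw [ENNReal.ofReal_add (by positivity) (by positivity)]
  calc traceLaw n m l (fun u => p u) {y | ¬ AccurateWithin t z (fun u => p u) y.1 y.2}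
      ≤ (νX.prod νW) (badX ×ˢ univ) + (νX.prod νW) (univ ×ˢ badW) :=
        (measure_mono hsub).trans (measure_union_le _ _)
    _ = νX badX + νW badW := by
        rw [Measure.prod_prod, Measure.prod_prod, measure_univ, measure_univ, mul_one, one_mul]
    _ ≤ _ := add_le_add hX hW

lemma twoStateLaw_not_accurateWithin_le {μP : Measure ℝ} [IsProbabilityMeasure μP]
    (h01 : ∀ᵐ x ∂μP, x ∈ unitInterval) (z : Fin n) {t : ℝ} (ht : 0 ≤ t) :
    twoStateLaw n m l μP {q | ¬ AccurateWithin t z q.1 q.2.1 q.2.2} ≤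
      ENNReal.ofReal (n * (2 * Real.exp (-2 * m * t ^ 2)) + 2 * Real.exp (-2 * l * t ^ 2)) :=
  twoStateLaw_le_of_forall_traceLaw_le h01 (measurableSet_not_accurateWithin t z)
    fun p => traceLaw_not_accurateWithin_le p z ht

lemma twoStateLaw_not_separatedFrom_le {μP : Measure ℝ} [IsProbabilityMeasure μP]
    (h01 : ∀ᵐ x ∂μP, x ∈ unitInterval) {C : ℝ≥0} (hC : μP ≤ C • volume) (z : Fin n) {r : ℝ} :
    twoStateLaw n m l μP {q | ¬ SeparatedFrom r z q.1} ≤ ENNReal.ofReal (n * (C * (2 * r))) := by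
  have hball (x : ℝ) : μP (Metric.ball x r) ≤ C * ENNReal.ofReal (2 * r) :=
    (hC _).trans_eq (by rw [Measure.smul_apply, Real.volume_ball]; rfl)
  calc twoStateLaw n m l μP {q | ¬ SeparatedFrom r z q.1}
      ≤ (Measure.pi fun _ => μP) {p | ¬ SeparatedFrom r z p} :=
        twoStateLaw_fst_preimage_le h01 (measurableSet_not_separatedFrom r z)
    _ ≤ n * (C * ENNReal.ofReal (2 * r)) := by
        simpa using pi_not_separatedFrom_le hball z
    _ = ENNReal.ofReal (n * (C * (2 * r))) := by
        rw [ENNReal.ofReal_mul (by positivity), ENNReal.ofReal_mul (by positivity)]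
        simp

end Recovery

/-! ### The optimal error probability -/

section ErrorProbability

variable {Ω α β : Type*} [MeasurableSpace Ω] [MeasurableSpace α] [MeasurableSpace β]

/-- The infimum over all measurable estimators `g` of the probability that `g` applied to the
observation `Y` differs from the target `Z`. -/
noncomputable def minErrorProb (μ : Measure Ω) (Y : Ω → α) (Z : Ω → β) : ℝ :=
  sInf {e : ℝ | ∃ g : α → β, Measurable g ∧ e = (μ {ω | g (Y ω) ≠ Z ω}).toReal}

lemma minErrorProb_nonneg (μ : Measure Ω) (Y : Ω → α) (Z : Ω → β) : 0 ≤ minErrorProb μ Y Z :=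
  Real.sInf_nonneg (by rintro _ ⟨g, -, rfl⟩; exact ENNReal.toReal_nonneg)

lemma minErrorProb_le (μ : Measure Ω) (Y : Ω → α) (Z : Ω → β) {g : α → β} (hg : Measurable g) :
    minErrorProb μ Y Z ≤ (μ {ω | g (Y ω) ≠ Z ω}).toReal :=
  csInf_le ⟨0, by rintro _ ⟨g, -, rfl⟩; exact ENNReal.toReal_nonneg⟩ ⟨g, hg, rfl⟩

lemma minErrorProb_statistic_le {n m l : ℕ} {μP : Measure ℝ} [IsProbabilityMeasure μP]
    (h01 : ∀ᵐ x ∂μP, x ∈ unitInterval) {C : ℝ≥0} (hC : μP ≤ C • volume)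
    {μ : Measure Ω} {P : Ω → Fin n → ℝ} {X : Ω → Fin n → Fin m → Bool}
    {W : Ω → Fin n → Fin l → Bool} (prm : Ω → Equiv.Perm (Fin n))
    (hlaw : HasLaw (fun ω => (P ω, X ω, W ω)) (twoStateLaw n m l μP) μ)
    (z : Fin n) (φ : (Fin m → Bool) → β) {t : ℝ} (ht : 0 ≤ t) :
    minErrorProb μ (fun ω => (W ω, fun v => X ω ((prm ω).symm v))) (fun ω => φ (X ω z)) ≤
      n * (2 * Real.exp (-2 * m * t ^ 2)) + 2 * Real.exp (-2 * l * t ^ 2)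
        + n * (C * (2 * (4 * t))) := by
  obtain ⟨g, hg⟩ := exists_estimator_eq_of_accurateWithin m l z
  refine (minErrorProb_le μ _ _ (g := φ ∘ g) .of_discrete).trans
    (ENNReal.toReal_le_of_le_ofReal (by positivity) ?_)
  rw [ENNReal.ofReal_add (by positivity) (by positivity)]
  calc μ {ω | φ (g (W ω, fun v => X ω ((prm ω).symm v))) ≠ φ (X ω z)}
      ≤ μ ({ω | ¬ AccurateWithin t z (P ω) (X ω) (W ω)} ∪
          {ω | ¬ SeparatedFrom (4 * t) z (P ω)}) := by
        refine measure_mono fun ω hω => ?_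
        by_contra! hgood
        simp only [mem_union, mem_ofPred_eq, not_or, not_not] at hgood
        exact hω (congrArg φ (hg (prm ω) hgood.1 hgood.2))
    _ ≤ μ {ω | ¬ AccurateWithin t z (P ω) (X ω) (W ω)} +
          μ {ω | ¬ SeparatedFrom (4 * t) z (P ω)} := measure_union_le _ _
    _ = twoStateLaw n m l μP {q | ¬ AccurateWithin t z q.1 q.2.1 q.2.2} +
          twoStateLaw n m l μP {q | ¬ SeparatedFrom (4 * t) z q.1} :=
        congrArg₂ _ (hlaw.measure_eq (measurableSet_not_accurateWithin t z))
          (hlaw.measure_eq (measurable_fst (measurableSet_not_separatedFrom (4 * t) z)))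
    _ ≤ _ := add_le_add (twoStateLaw_not_accurateWithin_le h01 z ht)
        (twoStateLaw_not_separatedFrom_le h01 hC z)

end ErrorProbability

/-! ### Parameter densities and uniform permutations -/

section WithDensity

variable {α : Type*} [MeasurableSpace α] {μ : Measure α} {f : α → ℝ≥0∞}

lemma withDensity_le_smul {C : ℝ≥0} (hf : ∀ᵐ x ∂μ, f x ≤ C) : μ.withDensity f ≤ C • μ :=
  (withDensity_mono hf).trans_eq (withDensity_const _)

lemma ae_withDensity_mem {s : Set α} (hs : MeasurableSet s) (hf : ∀ x ∉ s, f x = 0) :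
    ∀ᵐ x ∂μ.withDensity f, x ∈ s := by
  rw [ae_iff]
  change μ.withDensity f sᶜ = 0
  rw [withDensity_apply _ hs.compl]
  exact setLIntegral_eq_zero hs.compl hf

end WithDensity

lemma hasLaw_of_forall_measure_fiber {Ω S β : Type*} [MeasurableSpace Ω] [MeasurableSpace β]
    [Fintype S] {μ : Measure Ω} {ν : Measure β} {σ : Ω → S} {Z : Ω → β}
    (hσ : ∀ a, MeasurableSet {ω | σ ω = a}) (hZ : Measurable Z) (w : S → ℝ≥0∞)
    (hw : ∑ a, w a = 1)
    (h : ∀ a s, MeasurableSet s → μ {ω | σ ω = a ∧ Z ω ∈ s} = w a * ν s) : HasLaw Z ν μ := by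
  refine ⟨hZ.aemeasurable, Measure.ext fun s hs => ?_⟩
  have hunion : Z ⁻¹' s = ⋃ a, {ω | σ ω = a ∧ Z ω ∈ s} := by ext ω; simp
  have hdisj : Pairwise (Function.onFun Disjoint fun a => {ω | σ ω = a ∧ Z ω ∈ s}) :=
    fun a b hab => disjoint_left.2 fun ω ha hb => hab (ha.1.symm.trans hb.1)
  calc μ.map Z s = μ (⋃ a, {ω | σ ω = a ∧ Z ω ∈ s}) := by rw [Measure.map_apply hZ hs, hunion]
    _ = ∑ a, w a * ν s := by
        rw [measure_iUnion hdisj fun a => (hσ a).inter (hZ hs), tsum_fintype]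
        simp only [h _ s hs]
    _ = ν s := by rw [← Finset.sum_mul, hw, one_mul]

lemma sum_perm_inv_factorial (n : ℕ) :
    ∑ _σ : Equiv.Perm (Fin n), (n.factorial : ℝ≥0∞)⁻¹ = 1 := by
  rw [Finset.sum_const, Finset.card_univ, Fintype.card_perm, Fintype.card_fin, nsmul_eq_mul]
  exact ENNReal.mul_inv_cancel (mod_cast n.factorial_ne_zero) (ENNReal.natCast_ne_top _)

/-! ### Trace lengths -/

section TraceLength

variable {m : ℕ → ℕ} {ε : ℝ}

lemma tendsto_exp_of_sq_isLittleO
    (hm : (fun n : ℕ => (n : ℝ) ^ 2) =o[atTop] fun n => (m n : ℝ)) (hε : 0 < ε) :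
    Tendsto (fun n : ℕ => Real.exp (-2 * m n * (ε / n) ^ 2)) atTop (𝓝 0) := by
  refine Real.tendsto_exp_atBot.comp (tendsto_atBot.2 fun b => ?_)
  have hδ : 0 < ε ^ 2 / (|b| + 1) := by positivity
  filter_upwards [hm.def hδ, eventually_gt_atTop 0] with n hn hpos
  have hpos' : (0 : ℝ) < n := mod_cast hpos
  have hmn : |b| + 1 ≤ m n * (ε / n) ^ 2 := by
    rw [Real.norm_of_nonneg (by positivity), Real.norm_of_nonneg (by positivity)] at hn
    field_simp at hn ⊢
    linarith
  linarith [neg_abs_le b, abs_nonneg b]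

lemma tendsto_mul_exp_of_sq_mul_log_isLittleO
    (hm : (fun n : ℕ => (n : ℝ) ^ 2 * Real.log n) =o[atTop] fun n => (m n : ℝ)) (hε : 0 < ε) :
    Tendsto (fun n : ℕ => n * Real.exp (-2 * m n * (ε / n) ^ 2)) atTop (𝓝 0) := by
  refine squeeze_zero' (.of_forall fun n => by positivity) ?_ tendsto_inv_atTop_nhds_zero_nat
  filter_upwards [hm.def (pow_pos hε 2), eventually_gt_atTop 0] with n hn hpos
  have hpos' : (0 : ℝ) < n := mod_cast hpos
  have hlog : Real.log n ≤ m n * (ε / n) ^ 2 := by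
    rw [Real.norm_of_nonneg (by positivity), Real.norm_of_nonneg (by positivity)] at hn
    field_simp
    linarith
  calc n * Real.exp (-2 * m n * (ε / n) ^ 2)
      ≤ n * Real.exp (-Real.log n + -Real.log n) := by gcongr; linarith
    _ = (n : ℝ)⁻¹ := by
        rw [Real.exp_add, Real.exp_neg, Real.exp_log hpos']
        field_simp

end TraceLength

lemma rpow_mul_log_isLittleO_natCeil {c α : ℝ} (hc : 0 < c) (hα : 0 < α) (s : ℝ) :
    (fun x : ℝ => x ^ s * Real.log x) =o[atTop] fun x => (⌈c * x ^ (s + α)⌉₊ : ℝ) := by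
  have hrpow : (fun x : ℝ => x ^ s * Real.log x) =o[atTop] fun x => x ^ (s + α) := by
    refine ((isBigO_refl _ _).mul_isLittleO (isLittleO_log_rpow_atTop hα)).congr' .rfl ?_
    filter_upwards [eventually_gt_atTop 0] with x hx
    rw [Real.rpow_add hx]
  refine hrpow.trans_isBigO (.of_bound c⁻¹ ?_)
  filter_upwards [eventually_ge_atTop 0] with x hx
  rw [Real.norm_of_nonneg (by positivity), Real.norm_of_nonneg (by positivity),
    ← div_eq_inv_mul, le_div_iff₀' hc]
  exact Nat.le_ceil _

lemma natCast_sq_mul_log_isLittleO_natCeil {c α : ℝ} (hc : 0 < c) (hα : 0 < α) :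
    (fun n : ℕ => (n : ℝ) ^ 2 * Real.log n) =o[atTop]
      fun n : ℕ => (⌈c * (n : ℝ) ^ (2 + α)⌉₊ : ℝ) := by
  simpa only [Function.comp_def, Real.rpow_two] using
    (rpow_mul_log_isLittleO_natCeil hc hα 2).comp_tendsto tendsto_natCast_atTop_atTop

lemma natCast_sq_isLittleO_sq_mul_log :
    (fun n : ℕ => (n : ℝ) ^ 2) =o[atTop] fun n : ℕ => (n : ℝ) ^ 2 * Real.log n := by
  simpa only [Function.comp_def, mul_one] using
    (isBigO_refl (fun n : ℕ => (n : ℝ) ^ 2) atTop).mul_isLittleO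
      ((Real.isLittleO_const_log_atTop (c := 1)).comp_tendsto tendsto_natCast_atTop_atTop)

lemma tendsto_zero_of_eventually_le_add_mul {ι : Type*} {l : Filter ι} {a : ι → ℝ}
    {A : ℝ → ι → ℝ} {K : ℝ} (ha : ∀ i, 0 ≤ a i) (hA : ∀ ε > 0, Tendsto (A ε) l (𝓝 0))
    (hle : ∀ ε > 0, ∀ᶠ i in l, a i ≤ A ε i + K * ε) : Tendsto a l (𝓝 0) := by
  refine tendsto_order.2 ⟨fun b hb => .of_forall fun i => hb.trans_le (ha i), fun b hb => ?_⟩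
  have hδ : 0 < b / (2 * (|K| + 1)) := by positivity
  have hKδ : K * (b / (2 * (|K| + 1))) ≤ b / 2 := by
    have := le_abs_self K
    field_simp
    linarith
  filter_upwards [hle _ hδ, (hA _ hδ).eventually_lt_const (half_pos hb)] with i hi hAi
  linarith

/-! ### Vanishing error probability -/

theorem two_state_no_privacy_general {μP : Measure ℝ} [IsProbabilityMeasure μP]
    (h01 : ∀ᵐ x ∂μP, x ∈ unitInterval) {C : ℝ≥0} (hC : μP ≤ C • volume) {m l : ℕ → ℕ}
    (hm : (fun n : ℕ => (n : ℝ) ^ 2 * Real.log n) =o[atTop] fun n => (m n : ℝ))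
    (hl : (fun n : ℕ => (n : ℝ) ^ 2) =o[atTop] fun n => (l n : ℝ))
    {Ω β : ℕ → Type*} [∀ n, MeasurableSpace (Ω n)] [∀ n, MeasurableSpace (β n)]
    {μ : ∀ n, Measure (Ω n)} {P : ∀ n, Ω n → Fin n → ℝ} {X : ∀ n, Ω n → Fin n → Fin (m n) → Bool}
    {W : ∀ n, Ω n → Fin n → Fin (l n) → Bool} (prm : ∀ n, Ω n → Equiv.Perm (Fin n))
    (hlaw : ∀ n, HasLaw (fun ω => (P n ω, X n ω, W n ω)) (twoStateLaw n (m n) (l n) μP) (μ n))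
    (z : ∀ n, 0 < n → Fin n) (φ : ∀ n, 0 < n → (Fin (m n) → Bool) → β n) :
    Tendsto (fun n =>
        if hn : 0 < n then
          minErrorProb (μ n) (fun ω => (W n ω, fun v => X n ω ((prm n ω).symm v)))
            (fun ω => φ n hn (X n ω (z n hn)))
        else 0)
      atTop (𝓝 0) := by
  refine tendsto_zero_of_eventually_le_add_mul (K := 8 * C)
    (A := fun ε n => 2 * (n * Real.exp (-2 * m n * (ε / n) ^ 2)) +
      2 * Real.exp (-2 * l n * (ε / n) ^ 2)) (fun n => ?_) (fun ε hε => ?_) fun ε hε => ?_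
  · split_ifs
    exacts [minErrorProb_nonneg _ _ _, le_rfl]
  · simpa using ((tendsto_mul_exp_of_sq_mul_log_isLittleO hm hε).const_mul 2).add
      ((tendsto_exp_of_sq_isLittleO hl hε).const_mul 2)
  · filter_upwards [eventually_gt_atTop 0] with n hn
    rw [dif_pos hn]
    refine (minErrorProb_statistic_le h01 hC (prm n) (hlaw n) (z n hn) (φ n hn)
      (t := ε / n) (by positivity)).trans_eq ?_
    field_simp
    ring

/-- **Two-state i.i.d. model, no privacy.**  If `m n = ⌈c n^(2+α)⌉` and `l n = ⌈c' n^(2+α)⌉`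
for some `c, c', α > 0`, then user 1 has no privacy at every time `k`: the infimum over all
estimators (measurable functions of the adversary's observations `(W, Y)`, where
`Y v = X (Π⁻¹ v)` is the anonymized data) of the probability of incorrectly estimating
`X_1(k)` tends to `0` as `n → ∞`. -/
theorem two_state_no_privacy
    (f : ℝ → ℝ) (δ₁ δ₂ : ℝ) (hδ₁ : 0 < δ₁)
    (μP : Measure ℝ) [IsProbabilityMeasure μP]
    (hμP : μP = volume.withDensity fun x => ENNReal.ofReal (f x))
    (hf0 : ∀ x ∉ Set.Ioo (0 : ℝ) 1, f x = 0)
    (hf : ∀ x ∈ Set.Ioo (0 : ℝ) 1, δ₁ < f x ∧ f x < δ₂)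
    (m l : ℕ → ℕ) (c c' α : ℝ) (hc : 0 < c) (hc' : 0 < c') (hα : 0 < α)
    (hm : ∀ n : ℕ, m n = ⌈c * (n : ℝ) ^ ((2 : ℝ) + α)⌉₊)
    (hl : ∀ n : ℕ, l n = ⌈c' * (n : ℝ) ^ ((2 : ℝ) + α)⌉₊)
    (Ω : ℕ → Type) (mΩ : ∀ n, MeasurableSpace (Ω n))
    (μ : ∀ n, Measure (Ω n)) (hμ : ∀ n, IsProbabilityMeasure (μ n))
    (P : ∀ n, Ω n → Fin n → ℝ)
    (X : ∀ n, Ω n → Fin n → Fin (m n) → Bool)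
    (W : ∀ n, Ω n → Fin n → Fin (l n) → Bool)
    (prm : ∀ n, Ω n → Equiv.Perm (Fin n))
    (hP : ∀ n, Measurable (P n)) (hX : ∀ n, Measurable (X n))
    (hW : ∀ n, Measurable (W n))
    (hprm : ∀ n (σ : Equiv.Perm (Fin n)), MeasurableSet {ω | prm n ω = σ})
    -- `Π` is uniform on the `n!` permutations, independent of `(P, X, W)`, and
    -- `(P, X, W)` has the two-state i.i.d. law described above:
    (hjoint : ∀ n (σ : Equiv.Perm (Fin n))
        (s : Set ((Fin n → ℝ) × (Fin n → Fin (m n) → Bool) × (Fin n → Fin (l n) → Bool))),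
        MeasurableSet s →
        μ n {ω | prm n ω = σ ∧ (P n ω, X n ω, W n ω) ∈ s} =
          ((n.factorial : ℝ≥0∞))⁻¹ * twoStateLaw n (m n) (l n) μP s)
    -- an arbitrary choice of a time `k n ∈ {1, …, m n}` for each `n`:
    (k : ∀ n : ℕ, 0 < n → Fin (m n)) :
    Tendsto (fun n =>
        if hn : 0 < n then
          sInf {e : ℝ |
            ∃ g : (Fin n → Fin (l n) → Bool) × (Fin n → Fin (m n) → Bool) → Bool,
              Measurable g ∧
              e = (μ n {ω |
                    g (W n ω, fun v => X n ω ((prm n ω).symm v)) ≠ X n ω ⟨0, hn⟩ (k n hn)}).toReal}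
        else 0)
      atTop (nhds 0) := by
  subst hμP
  have hC : volume.withDensity (fun x => ENNReal.ofReal (f x)) ≤ δ₂.toNNReal • volume := by
    refine withDensity_le_smul (ae_of_all _ fun x => ?_)
    by_cases hx : x ∈ Ioo (0 : ℝ) 1
    · exact ENNReal.ofReal_le_ofReal (hf x hx).2.le
    · simp [hf0 x hx]
  have h01 : ∀ᵐ x ∂volume.withDensity (fun x => ENNReal.ofReal (f x)), x ∈ unitInterval :=
    ae_withDensity_mem measurableSet_Icc fun x hx => by
      rw [hf0 x (mt (Ioo_subset_Icc_self ·) hx), ENNReal.ofReal_zero]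
  have hlaw (n : ℕ) : HasLaw (fun ω => (P n ω, X n ω, W n ω))
      (twoStateLaw n (m n) (l n) (volume.withDensity fun x => ENNReal.ofReal (f x))) (μ n) :=
    hasLaw_of_forall_measure_fiber (hprm n) ((hP n).prodMk ((hX n).prodMk (hW n))) _
      (sum_perm_inv_factorial n) (hjoint n)
  obtain rfl : m = _ := funext hm
  obtain rfl : l = _ := funext hl
  exact two_state_no_privacy_general h01 hC (natCast_sq_mul_log_isLittleO_natCeil hc hα)
    (natCast_sq_isLittleO_sq_mul_log.trans (natCast_sq_mul_log_isLittleO_natCeil hc' hα)) prm hlaw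
    (fun n hn => ⟨0, hn⟩) (fun n hn x => x (k n hn))
end

section
/- In the r-state i.i.d. model, if at least one of the trace lengths m(n) or l(n) is less than or equal to c·n^{2/(r−1)−α} for some constants c > 0 and α > 0, then user 1 has perfect anonymity: the Shannon conditional entropy H(Π(1) | W, Y) tends to +∞ as n → ∞. -/
open MeasureTheory ProbabilityTheory Filter
open scoped ENNReal NNReal

/-- Discrete measure on `Fin r` assigning mass `q i` to the point `i`. -/
noncomputable def catMeasure (r : ℕ) (q : Fin r → ℝ) : Measure (Fin r) :=
  ∑ i : Fin r, ENNReal.ofReal (q i) • Measure.dirac i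

/-- Extend a parameter vector `(p 1, …, p (r-1))` (probabilities of the values `1, …, r-1`)
to a full probability vector on `{0, 1, …, r-1}`, value `0` receiving the remaining mass. -/
noncomputable def fullProb (r : ℕ) (p : Fin (r - 1) → ℝ) : Fin r → ℝ := fun i =>
  if h : (i : ℕ) = 0 then 1 - ∑ j, p j
  else p ⟨(i : ℕ) - 1, by have := i.isLt; omega⟩

/-- The open region `{x ∈ (0,1)^d : xᵢ > 0, x₁ + ⋯ + x_d < 1}` of admissible parameters. -/
def simplexRegion (d : ℕ) : Set (Fin d → ℝ) :=
  {x | (∀ i, 0 < x i) ∧ ∑ i, x i < 1}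

/-- Joint law of (parameters, actual traces, training traces) in the `r`-state i.i.d. model:
the parameter vectors `p u` are i.i.d. with law `μP`, and conditionally on the parameters the
`n` actual traces (of length `m`) and training traces (of length `l`) consist of i.i.d.
samples from `{0, …, r-1}` where value `i ≥ 1` has probability `p u i` and value `0` the
remaining probability; all traces are mutually independent. -/
noncomputable def rStateLaw (n m l r : ℕ) (μP : Measure (Fin (r - 1) → ℝ)) :
    Measure ((Fin n → Fin (r - 1) → ℝ) × (Fin n → Fin m → Fin r) × (Fin n → Fin l → Fin r)) :=
  (Measure.pi fun _ : Fin n => μP).bind fun p =>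
    (Measure.dirac p).prod
      ((Measure.pi fun u : Fin n =>
          Measure.pi fun _ : Fin m => catMeasure r (fullProb r (p u))).prod
        (Measure.pi fun u : Fin n =>
          Measure.pi fun _ : Fin l => catMeasure r (fullProb r (p u))))

/-- Shannon conditional entropy `H(A | B)` of discrete random variables `A` and `B`. -/
noncomputable def shCondEntropy {Ω α β : Type*} [MeasurableSpace Ω] (μ : Measure Ω)
    (A : Ω → α) (B : Ω → β) : ℝ :=
  -∑' (a : α) (b : β),
    (μ (A ⁻¹' {a} ∩ B ⁻¹' {b})).toReal *
      Real.log ((μ (A ⁻¹' {a} ∩ B ⁻¹' {b})).toReal / (μ (B ⁻¹' {b})).toReal)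

/-!
An adversary who sees `(W, Y)` and names any bounded list of candidates for `Π(1)` misses it with
probability close to `1`; conditional entropy is bounded below by such list-decoding failures.

A list fails because user `1` can be exchanged with the users whose parameters are close to its own.
Exchanging two users only in the shorter of the two families of traces changes the law of the data
by a total variation distance which, by a `χ²` bound, is small when the parameters differ by `1 / k`
and `min m l = o(k ^ 2)`. If also `k ^ (r - 1) = o(n)`, the pigeonhole principle on a grid of mesh
`1 / k` gives almost every user many such neighbours, and a bounded list can contain only a small
fraction of them. Both requirements on `k` can be met because `min m l = o(n ^ (2 / (r - 1)))`.
-/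

open scoped Finset Nat

/-! ### Conditional entropy and list decoding -/

section Entropy

variable {Ω α β : Type*} [MeasurableSpace Ω] {μ : Measure Ω} {A : Ω → α} {B : Ω → β} {t : ℝ}

/-- The conditional probability `ℙ(A = a | B = b)`, equal to `0` when `ℙ(B = b) = 0`. -/
noncomputable def posteriorProb (μ : Measure Ω) (A : Ω → α) (B : Ω → β) (a : α) (b : β) : ℝ :=
  μ.real (A ⁻¹' {a} ∩ B ⁻¹' {b}) / μ.real (B ⁻¹' {b})

lemma posteriorProb_le_one [IsFiniteMeasure μ] (a : α) (b : β) : posteriorProb μ A B a b ≤ 1 :=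
  div_le_one_of_le₀ (measureReal_mono Set.inter_subset_right) measureReal_nonneg

lemma posteriorProb_nonneg (a : α) (b : β) : 0 ≤ posteriorProb μ A B a b :=
  div_nonneg measureReal_nonneg measureReal_nonneg

lemma posteriorProb_pos [IsFiniteMeasure μ] {a : α} {b : β}
    (h : 0 < μ.real (A ⁻¹' {a} ∩ B ⁻¹' {b})) : 0 < posteriorProb μ A B a b :=
  div_pos h (h.trans_le (measureReal_mono Set.inter_subset_right))

lemma sum_posteriorProb_le_one [IsFiniteMeasure μ] [Fintype α]
    (hA : ∀ a, MeasurableSet (A ⁻¹' {a})) (b : β) : ∑ a, posteriorProb μ A B a b ≤ 1 := by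
  simp only [posteriorProb, ← Finset.sum_div]
  refine div_le_one_of_le₀ ?_ measureReal_nonneg
  calc ∑ a, μ.real (A ⁻¹' {a} ∩ B ⁻¹' {b})
      = ∑ a, (μ.restrict (B ⁻¹' {b})).real (A ⁻¹' {a}) := by
        simp only [measureReal_restrict_apply (hA _)]
    _ = (μ.restrict (B ⁻¹' {b})).real (⋃ a ∈ Finset.univ, A ⁻¹' {a}) := by
        refine (measureReal_biUnion_finset (fun a _ a' _ haa' => ?_) fun a _ => hA a).symm
        exact Disjoint.preimage A (Set.disjoint_singleton.2 haa')
    _ ≤ (μ.restrict (B ⁻¹' {b})).real Set.univ := measureReal_mono (Set.subset_univ _)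
    _ = μ.real (B ⁻¹' {b}) := by simp only [measureReal_restrict_apply_univ]

lemma card_lt_posteriorProb_mul_le_one [IsFiniteMeasure μ] [Fintype α]
    (hA : ∀ a, MeasurableSet (A ⁻¹' {a})) (t : ℝ) (b : β) :
    (#{a | t < posteriorProb μ A B a b} : ℝ) * t ≤ 1 := by
  rw [← nsmul_eq_mul]
  calc #{a | t < posteriorProb μ A B a b} • t
      ≤ ∑ a with t < posteriorProb μ A B a b, posteriorProb μ A B a b :=
        Finset.card_nsmul_le_sum _ _ _ fun a ha => (Finset.mem_filter.1 ha).2.le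
    _ ≤ ∑ a, posteriorProb μ A B a b :=
        Finset.sum_le_univ_sum_of_nonneg fun a => posteriorProb_nonneg a b
    _ ≤ 1 := sum_posteriorProb_le_one hA b

lemma shCondEntropy_comp_of_injective {γ : Type*} {g : α → γ} (hg : Function.Injective g) :
    shCondEntropy μ (g ∘ A) B = shCondEntropy μ A B := by
  unfold shCondEntropy
  rw [← hg.tsum_eq]
  · simp only [Set.preimage_comp, ← Set.image_singleton, hg.preimage_image]
  · refine Function.support_subset_iff'.2 fun c hc => ?_
    have : g ∘ A ⁻¹' {c} = ∅ := Set.eq_empty_of_forall_notMem fun ω hω => hc ⟨A ω, hω⟩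
    simp [this]

lemma shCondEntropy_eq_sum [Fintype α] [Fintype β] :
    shCondEntropy μ A B = ∑ a, ∑ b,
      μ.real (A ⁻¹' {a} ∩ B ⁻¹' {b}) * -Real.log (posteriorProb μ A B a b) := by
  simp only [shCondEntropy, tsum_fintype, mul_neg, Finset.sum_neg_distrib]
  rfl

lemma measureReal_le_sum_fibers [IsFiniteMeasure μ] [Fintype α] [Fintype β]
    (r : α → β → Prop) [∀ a b, Decidable (r a b)] :
    μ.real {ω | r (A ω) (B ω)} ≤
      ∑ a, ∑ b, if r a b then μ.real (A ⁻¹' {a} ∩ B ⁻¹' {b}) else 0 := by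
  calc μ.real {ω | r (A ω) (B ω)}
      ≤ μ.real (⋃ z ∈ ({z | r z.1 z.2} : Finset (α × β)), A ⁻¹' {z.1} ∩ B ⁻¹' {z.2}) := by
        refine measureReal_mono (fun ω hω => ?_) (measure_ne_top _ _)
        simp only [Set.mem_iUnion]
        exact ⟨(A ω, B ω), by simpa using hω, rfl, rfl⟩
    _ ≤ ∑ z : α × β with r z.1 z.2, μ.real (A ⁻¹' {z.1} ∩ B ⁻¹' {z.2}) :=
        measureReal_biUnion_finset_le _ _
    _ = _ := by rw [Finset.sum_filter, Fintype.sum_prod_type]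

lemma neg_log_mul_measureReal_posteriorProb_le [IsFiniteMeasure μ] [Finite α] [Finite β]
    (ht : 0 < t) (ht1 : t ≤ 1) :
    -Real.log t * μ.real {ω | posteriorProb μ A B (A ω) (B ω) ≤ t} ≤ shCondEntropy μ A B := by
  cases nonempty_fintype α
  cases nonempty_fintype β
  have hlog : 0 ≤ -Real.log t := neg_nonneg.2 (Real.log_nonpos ht.le ht1)
  refine (mul_le_mul_of_nonneg_left
    (measureReal_le_sum_fibers fun a b => posteriorProb μ A B a b ≤ t) hlog).trans ?_
  simp only [shCondEntropy_eq_sum, Finset.mul_sum]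
  refine Finset.sum_le_sum fun a _ => Finset.sum_le_sum fun b _ => ?_
  rcases (measureReal_nonneg (μ := μ) (s := A ⁻¹' {a} ∩ B ⁻¹' {b})).eq_or_lt with h0 | hpos
  · simp [← h0]
  · rw [mul_comm]
    split_ifs with hle
    · gcongr
      exact posteriorProb_pos hpos
    · rw [zero_mul]
      exact mul_nonneg hpos.le
        (neg_nonneg.2 (Real.log_nonpos (posteriorProb_nonneg a b) (posteriorProb_le_one a b)))

/-- The values of posterior probability above `1 / N` form a list of length at most `N`; off this
list the surprisal is at least `log N`. -/
lemma mul_log_le_shCondEntropy_of_list [IsProbabilityMeasure μ] [Finite α] [Finite β]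
    (hA : ∀ a, MeasurableSet (A ⁻¹' {a})) {N : ℕ} (hN : 0 < N) {δ : ℝ}
    (hlist : ∀ D : β → Finset α, (∀ b, #(D b) ≤ N) → μ.real {ω | A ω ∈ D (B ω)} ≤ δ) :
    (1 - δ) * Real.log N ≤ shCondEntropy μ A B := by
  cases nonempty_fintype α
  have hN' : (0 : ℝ) < N := Nat.cast_pos.2 hN
  let D : β → Finset α := fun b => {a | (N : ℝ)⁻¹ < posteriorProb μ A B a b}
  have hD (b : β) : #(D b) ≤ N := by
    have := card_lt_posteriorProb_mul_le_one (μ := μ) (B := B) hA (N : ℝ)⁻¹ b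
    rw [← div_eq_mul_inv, div_le_one hN'] at this
    exact_mod_cast this
  have hmiss : 1 - δ ≤ μ.real {ω | posteriorProb μ A B (A ω) (B ω) ≤ (N : ℝ)⁻¹} := by
    have hunion := measureReal_union_le (μ := μ) {ω | A ω ∈ D (B ω)}
      {ω | posteriorProb μ A B (A ω) (B ω) ≤ (N : ℝ)⁻¹}
    have huniv : {ω | A ω ∈ D (B ω)} ∪ {ω | posteriorProb μ A B (A ω) (B ω) ≤ (N : ℝ)⁻¹} =
        Set.univ := Set.eq_univ_of_forall fun ω => by simp [D, lt_or_ge]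
    rw [huniv, probReal_univ] at hunion
    linarith [hlist D hD]
  calc (1 - δ) * Real.log N
      ≤ μ.real {ω | posteriorProb μ A B (A ω) (B ω) ≤ (N : ℝ)⁻¹} * Real.log N :=
        mul_le_mul_of_nonneg_right hmiss (Real.log_natCast_nonneg N)
    _ = -Real.log (N : ℝ)⁻¹ * μ.real {ω | posteriorProb μ A B (A ω) (B ω) ≤ (N : ℝ)⁻¹} := by
        rw [Real.log_inv, neg_neg, mul_comm]
    _ ≤ shCondEntropy μ A B := neg_log_mul_measureReal_posteriorProb_le (inv_pos.2 hN')
        (inv_le_one_of_one_le₀ (Nat.one_le_cast.2 hN))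

end Entropy

/-! ### Total variation between product distributions -/

section TotalVariation

variable {ι κ : Type*} [Fintype ι] [Fintype κ]

/-- The quantity `1 + χ²(Q ‖ P)` for finite probability vectors `P` and `Q`; unlike `χ²` itself it
is multiplicative over products. -/
noncomputable def oneAddChiSq (P Q : κ → ℝ) : ℝ := ∑ k, Q k ^ 2 / P k

lemma oneAddChiSq_nonneg {P : κ → ℝ} (hP : ∀ k, 0 ≤ P k) (Q : κ → ℝ) : 0 ≤ oneAddChiSq P Q :=
  Finset.sum_nonneg fun k _ => div_nonneg (sq_nonneg _) (hP k)

lemma oneAddChiSq_self (P : κ → ℝ) : oneAddChiSq P P = ∑ k, P k := by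
  simp only [oneAddChiSq, sq, mul_self_div_self]

lemma oneAddChiSq_sub_one {P Q : κ → ℝ} (hP : ∀ k, P k ≠ 0) (hP1 : ∑ k, P k = 1)
    (hQ1 : ∑ k, Q k = 1) : oneAddChiSq P Q - 1 = ∑ k, (Q k - P k) ^ 2 / P k := by
  have hterm (k : κ) : (Q k - P k) ^ 2 / P k = Q k ^ 2 / P k - 2 * Q k + P k := by
    have := hP k
    field_simp
    ring
  simp only [hterm, Finset.sum_add_distrib, Finset.sum_sub_distrib, ← Finset.mul_sum, hP1, hQ1,
    oneAddChiSq]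
  ring

lemma sum_abs_sub_le_sqrt_oneAddChiSq_sub_one {P Q : κ → ℝ} (hP : ∀ k, 0 < P k)
    (hP1 : ∑ k, P k = 1) (hQ1 : ∑ k, Q k = 1) :
    ∑ k, |Q k - P k| ≤ √(oneAddChiSq P Q - 1) := by
  apply Real.le_sqrt_of_sq_le
  rw [oneAddChiSq_sub_one (fun k => (hP k).ne') hP1 hQ1]
  calc (∑ k, |Q k - P k|) ^ 2 ≤ (∑ k, (Q k - P k) ^ 2 / P k) * ∑ k, P k := by
        refine Finset.sum_sq_le_sum_mul_sum_of_sq_le_mul _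
          (fun k _ => div_nonneg (sq_nonneg _) (hP k).le) (fun k _ => (hP k).le) fun k _ => ?_
        rw [sq_abs, div_mul_cancel₀ _ (hP k).ne']
    _ = ∑ k, (Q k - P k) ^ 2 / P k := by rw [hP1, mul_one]

lemma oneAddChiSq_pi [DecidableEq ι] (P Q : ι → κ → ℝ) :
    oneAddChiSq (fun x : ι → κ => ∏ i, P i (x i)) (fun x => ∏ i, Q i (x i)) =
      ∏ i, oneAddChiSq (P i) (Q i) := by
  simp only [oneAddChiSq, Fintype.prod_sum, Finset.prod_div_distrib, Finset.prod_pow]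

lemma oneAddChiSq_le_exp {P Q : κ → ℝ} {η Δ : ℝ} (hη : 0 < η) (hP : ∀ k, η ≤ P k)
    (hP1 : ∑ k, P k = 1) (hQ1 : ∑ k, Q k = 1) (hΔ : ∀ k, |Q k - P k| ≤ Δ) :
    oneAddChiSq P Q ≤ Real.exp (Fintype.card κ * (Δ ^ 2 / η)) := by
  have hsum : ∑ k, (Q k - P k) ^ 2 / P k ≤ Fintype.card κ * (Δ ^ 2 / η) := by
    calc ∑ k, (Q k - P k) ^ 2 / P k ≤ ∑ _k : κ, Δ ^ 2 / η := by
          refine Finset.sum_le_sum fun k _ => div_le_div₀ (sq_nonneg _) ?_ hη (hP k)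
          exact sq_le_sq' (abs_le.1 (hΔ k)).1 (abs_le.1 (hΔ k)).2
      _ = Fintype.card κ * (Δ ^ 2 / η) := by
          rw [Finset.sum_const, Finset.card_univ, nsmul_eq_mul]
  rw [← oneAddChiSq_sub_one (fun k => (hη.trans_le (hP k)).ne') hP1 hQ1] at hsum
  linarith [Real.add_one_le_exp (Fintype.card κ * (Δ ^ 2 / η))]

lemma oneAddChiSq_pow_le_exp {P Q : κ → ℝ} {η Δ : ℝ} (hη : 0 < η) (hP : ∀ k, η ≤ P k)
    (hP1 : ∑ k, P k = 1) (hQ1 : ∑ k, Q k = 1) (hΔ : ∀ k, |Q k - P k| ≤ Δ) (N : ℕ) :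
    oneAddChiSq P Q ^ N ≤ Real.exp (N * (Fintype.card κ * (Δ ^ 2 / η))) := by
  rw [Real.exp_nat_mul]
  exact pow_le_pow_left₀ (oneAddChiSq_nonneg (fun k => hη.le.trans (hP k)) Q)
    (oneAddChiSq_le_exp hη hP hP1 hQ1 hΔ) N

lemma prod_oneAddChiSq_swap_pow_le [DecidableEq ι] {q : ι → κ → ℝ}
    (hq : ∀ u, ∑ k, q u k = 1) {a b : ι} {η Δ : ℝ} (hη : 0 < η) (ha : ∀ k, η ≤ q a k)
    (hb : ∀ k, η ≤ q b k) (hΔ : ∀ k, |q a k - q b k| ≤ Δ) (N : ℕ) :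
    ∏ u, oneAddChiSq (q u) (q (Equiv.swap a b u)) ^ N ≤
      Real.exp (2 * (N * (Fintype.card κ * (Δ ^ 2 / η)))) := by
  have hab := oneAddChiSq_pow_le_exp hη ha (hq a) (hq b)
    (fun k => (abs_sub_comm _ _).trans_le (hΔ k)) N
  have hba := oneAddChiSq_pow_le_exp hη hb (hq b) (hq a) hΔ N
  rw [two_mul, Real.exp_add]
  rcases eq_or_ne a b with rfl | hne
  · simp only [Equiv.swap_self, Equiv.refl_apply, oneAddChiSq_self, hq, one_pow,
      Finset.prod_const_one]
    exact one_le_mul_of_one_le_of_one_le (Real.one_le_exp (by positivity))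
      (Real.one_le_exp (by positivity))
  · rw [Fintype.prod_eq_mul a b hne fun u hu => by
      rw [Equiv.swap_apply_of_ne_of_ne hu.1 hu.2, oneAddChiSq_self, hq, one_pow],
      Equiv.swap_apply_left, Equiv.swap_apply_right]
    have hb0 := oneAddChiSq_nonneg (fun k => hη.le.trans (hb k)) (q a)
    exact mul_le_mul hab hba (pow_nonneg hb0 _) (Real.exp_pos _).le

end TotalVariation

/-! ### Traces -/

section Traces

variable {ι κ J : Type*} [Fintype ι] [Fintype J]

/-- The likelihood of the collection of traces `x` when the entries of the trace of user `u` are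
i.i.d. with probability vector `q u`. -/
noncomputable def traceLik (q : ι → κ → ℝ) (x : ι → J → κ) : ℝ≥0∞ :=
  ∏ u, ∏ j, ENNReal.ofReal (q u (x u j))

lemma traceLik_eq_ofReal {q : ι → κ → ℝ} (hq : ∀ u k, 0 ≤ q u k) (x : ι → J → κ) :
    traceLik q x = ENNReal.ofReal (∏ u, ∏ j, q u (x u j)) := by
  rw [ENNReal.ofReal_prod_of_nonneg fun u _ => Finset.prod_nonneg fun j _ => hq u (x u j)]
  exact Finset.prod_congr rfl fun u _ =>
    (ENNReal.ofReal_prod_of_nonneg fun j _ => hq u (x u j)).symm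

lemma traceLik_comp_perm (q : ι → κ → ℝ) (x : ι → J → κ) (τ : Equiv.Perm ι) :
    traceLik (q ∘ τ) (x ∘ τ) = traceLik q x :=
  Equiv.prod_comp τ fun u => ∏ j, ENNReal.ofReal (q u (x u j))

lemma measurable_traceLik {E : Type*} [MeasurableSpace E] {Q : E → κ → ℝ}
    (hQ : ∀ k, Measurable fun e => Q e k) (x : ι → J → κ) :
    Measurable fun p : ι → E => traceLik (Q ∘ p) x :=
  Finset.measurable_prod _ fun u _ => Finset.measurable_prod _ fun j _ =>
    ((hQ (x u j)).comp (measurable_pi_apply u)).ennreal_ofReal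

variable [Fintype κ] [DecidableEq ι] [DecidableEq J]

lemma sum_prod_trace_eq_one {q : ι → κ → ℝ} (hq : ∀ u, ∑ k, q u k = 1) :
    ∑ x : ι → J → κ, ∏ u, ∏ j, q u (x u j) = 1 := by
  rw [← Fintype.prod_sum fun u (z : J → κ) => ∏ j, q u (z j)]
  simp only [← Fintype.prod_sum fun _ : J => q _, hq, Finset.prod_const_one]

lemma sum_traceLik_eq_one {q : ι → κ → ℝ} (hq0 : ∀ u k, 0 ≤ q u k) (hq : ∀ u, ∑ k, q u k = 1) :
    ∑ x : ι → J → κ, traceLik q x = 1 := by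
  simp only [traceLik_eq_ofReal hq0]
  rw [← ENNReal.ofReal_sum_of_nonneg fun x _ => Finset.prod_nonneg fun u _ =>
    Finset.prod_nonneg fun j _ => hq0 u (x u j), sum_prod_trace_eq_one hq, ENNReal.ofReal_one]

lemma oneAddChiSq_trace (P Q : ι → κ → ℝ) :
    oneAddChiSq (fun x : ι → J → κ => ∏ u, ∏ j, P u (x u j)) (fun x => ∏ u, ∏ j, Q u (x u j)) =
      ∏ u, oneAddChiSq (P u) (Q u) ^ Fintype.card J := by
  rw [oneAddChiSq_pi (fun u (z : J → κ) => ∏ j, P u (z j)) fun u z => ∏ j, Q u (z j)]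
  simp only [oneAddChiSq_pi, Finset.prod_const, Finset.card_univ]

lemma sum_traceLik_comp_swap_sub_le {q : ι → κ → ℝ} (hq0 : ∀ u k, 0 < q u k)
    (hq : ∀ u, ∑ k, q u k = 1) {a b : ι} {η Δ : ℝ} (hη : 0 < η) (ha : ∀ k, η ≤ q a k)
    (hb : ∀ k, η ≤ q b k) (hΔ : ∀ k, |q a k - q b k| ≤ Δ) :
    ∑ x : ι → J → κ, (traceLik (q ∘ Equiv.swap a b) x - traceLik q x) ≤
      ENNReal.ofReal √(Real.exp (2 * (Fintype.card J * (Fintype.card κ * (Δ ^ 2 / η)))) - 1) := by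
  let lik (q : ι → κ → ℝ) (x : ι → J → κ) : ℝ := ∏ u, ∏ j, q u (x u j)
  have hlik0 (x) : 0 < lik q x := Finset.prod_pos fun u _ => Finset.prod_pos fun j _ => hq0 u _
  calc ∑ x : ι → J → κ, (traceLik (q ∘ Equiv.swap a b) x - traceLik q x)
      ≤ ∑ x, ENNReal.ofReal |lik (q ∘ Equiv.swap a b) x - lik q x| := by
        refine Finset.sum_le_sum fun x _ => ?_
        rw [traceLik_eq_ofReal (q := q ∘ Equiv.swap a b) fun u k => (hq0 _ k).le,
          traceLik_eq_ofReal (q := q) fun u k => (hq0 u k).le,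
          ← ENNReal.ofReal_sub _ (hlik0 x).le]
        exact ENNReal.ofReal_le_ofReal (le_abs_self _)
    _ = ENNReal.ofReal (∑ x, |lik (q ∘ Equiv.swap a b) x - lik q x|) :=
        (ENNReal.ofReal_sum_of_nonneg fun _ _ => abs_nonneg _).symm
    _ ≤ ENNReal.ofReal √(oneAddChiSq (lik q) (lik (q ∘ Equiv.swap a b)) - 1) :=
        ENNReal.ofReal_le_ofReal <| sum_abs_sub_le_sqrt_oneAddChiSq_sub_one hlik0
          (sum_prod_trace_eq_one hq) (sum_prod_trace_eq_one fun u => hq _)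
    _ ≤ _ := by
        rw [oneAddChiSq_trace q (q ∘ Equiv.swap a b)]
        gcongr
        exact prod_oneAddChiSq_swap_pow_le hq hη ha hb hΔ _

end Traces

/-! ### Probability that a label is listed -/

section Listing

variable {ι 𝒳 𝒲 : Type*} [Fintype ι] [DecidableEq ι]

/-- The conditional probability, given actual traces `x` and training traces `w`, that the label
`σ u` of user `u` belongs to the list `D` computed from `w` and the anonymized traces
`x ∘ σ.symm`, when the permutation `σ` is uniform. -/
noncomputable def listProb (D : 𝒲 × (ι → 𝒳) → Finset ι) (u : ι) (x : ι → 𝒳) (w : 𝒲) : ℝ≥0∞ :=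
  #{σ : Equiv.Perm ι | σ u ∈ D (w, x ∘ σ.symm)} / (Fintype.card ι)!

variable (D : 𝒲 × (ι → 𝒳) → Finset ι)

lemma listProb_le_one (u : ι) (x : ι → 𝒳) (w : 𝒲) : listProb D u x w ≤ 1 := by
  refine ENNReal.div_le_of_le_mul ?_
  rw [one_mul, ← Fintype.card_perm]
  exact_mod_cast Finset.card_le_univ _

variable {D} in
lemma sum_listProb_le {s : ℕ} (hD : ∀ b, #(D b) ≤ s) (x : ι → 𝒳) (w : 𝒲) :
    ∑ u, listProb D u x w ≤ s := by
  simp only [listProb, div_eq_mul_inv, ← Finset.sum_mul]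
  refine ENNReal.div_le_of_le_mul ?_
  norm_cast
  calc ∑ u, #{σ : Equiv.Perm ι | σ u ∈ D (w, x ∘ σ.symm)}
      = ∑ σ : Equiv.Perm ι, #{u | σ u ∈ D (w, x ∘ σ.symm)} :=
        Finset.sum_card_bipartiteAbove_eq_sum_card_bipartiteBelow
          fun u (σ : Equiv.Perm ι) => σ u ∈ D (w, x ∘ σ.symm)
    _ ≤ ∑ _σ : Equiv.Perm ι, s := by
        refine Finset.sum_le_sum fun σ _ => (Finset.card_le_card_of_injOn σ ?_
          σ.injective.injOn).trans (hD (w, x ∘ σ.symm))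
        exact fun u hu => (Finset.mem_filter.1 hu).2
    _ = s * (Fintype.card ι)! := by
        rw [Finset.sum_const, Finset.card_univ, Fintype.card_perm, smul_eq_mul, mul_comm]

lemma listProb_comp_swap (i u : ι) (x : ι → 𝒳) (w : 𝒲) :
    listProb D u (x ∘ Equiv.swap i u) w = listProb D i x w := by
  unfold listProb
  congr 2
  refine Finset.card_equiv (Equiv.mulRight (Equiv.swap i u)) fun σ => ?_
  have hinv : ((σ * Equiv.swap i u).symm : ι → ι) = Equiv.swap i u ∘ σ.symm := rfl
  simp only [Finset.mem_filter_univ, Equiv.coe_mulRight, hinv, Equiv.Perm.mul_apply,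
    Equiv.swap_apply_left, Function.comp_assoc]

end Listing

section Hitting

variable {ι κ J J' : Type*} [Fintype ι] [DecidableEq ι] [Fintype κ] [Fintype J] [DecidableEq J]
  [Fintype J'] [DecidableEq J']

/-- The probability that the list `D` contains the label of user `u`, when the actual and the
training traces of each user `v` are i.i.d. with probability vectors `q v` and `q' v`
respectively. In the model `q = q'`; perturbing them separately is what lets the shorter trace
decide. -/
noncomputable def hitProb (D : (ι → J' → κ) × (ι → J → κ) → Finset ι) (u : ι)
    (q q' : ι → κ → ℝ) : ℝ≥0∞ :=
  ∑ x, ∑ w, traceLik q x * traceLik q' w * listProb D u x w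

variable (D : (ι → J' → κ) × (ι → J → κ) → Finset ι) {q q' : ι → κ → ℝ}

lemma hitProb_comp_swap (i u : ι) (q q' : ι → κ → ℝ) :
    hitProb D u (q ∘ Equiv.swap i u) q' = hitProb D i q q' := by
  unfold hitProb
  rw [← Equiv.sum_comp ((Equiv.swap i u).arrowCongr (Equiv.refl (J → κ)))]
  refine Finset.sum_congr rfl fun x _ => Finset.sum_congr rfl fun w _ => ?_
  change traceLik _ (x ∘ Equiv.swap i u) * _ * listProb D u (x ∘ Equiv.swap i u) w = _
  rw [traceLik_comp_perm, listProb_comp_swap]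

lemma measurable_hitProb {E : Type*} [MeasurableSpace E] {Q : E → κ → ℝ}
    (hQ : ∀ k, Measurable fun e => Q e k) (u : ι) :
    Measurable fun p : ι → E => hitProb D u (Q ∘ p) (Q ∘ p) :=
  Finset.measurable_sum _ fun x _ => Finset.measurable_sum _ fun w _ =>
    ((measurable_traceLik hQ x).mul (measurable_traceLik hQ w)).mul_const _

lemma lintegral_hitProb {E : Type*} [MeasurableSpace E] (ν : Measure (ι → E)) {Q : E → κ → ℝ}
    (hQ : ∀ k, Measurable fun e => Q e k) (u : ι) :
    ∫⁻ p, hitProb D u (Q ∘ p) (Q ∘ p) ∂ν =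
      ∑ x, ∑ w, (∫⁻ p, traceLik (Q ∘ p) x * traceLik (Q ∘ p) w ∂ν) * listProb D u x w := by
  have hmeas (x : ι → J → κ) (w : ι → J' → κ) :
      Measurable fun p : ι → E => traceLik (Q ∘ p) x * traceLik (Q ∘ p) w :=
    (measurable_traceLik hQ x).mul (measurable_traceLik hQ w)
  simp only [hitProb]
  rw [lintegral_finsetSum _ fun x _ => Finset.measurable_sum _ fun w _ => (hmeas x w).mul_const _]
  refine Finset.sum_congr rfl fun x _ => ?_
  rw [lintegral_finsetSum _ fun w _ => (hmeas x w).mul_const _]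
  exact Finset.sum_congr rfl fun w _ => lintegral_mul_const _ (hmeas x w)

lemma sum_hitProb_le {s : ℕ} (hD : ∀ b, #(D b) ≤ s) (hq0 : ∀ u k, 0 ≤ q u k)
    (hq : ∀ u, ∑ k, q u k = 1) (hq'0 : ∀ u k, 0 ≤ q' u k) (hq' : ∀ u, ∑ k, q' u k = 1) :
    ∑ u, hitProb D u q q' ≤ s := by
  calc ∑ u, hitProb D u q q'
      = ∑ x, ∑ w, traceLik q x * traceLik q' w * ∑ u, listProb D u x w := by
        simp only [hitProb, Finset.mul_sum]
        rw [Finset.sum_comm]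
        exact Finset.sum_congr rfl fun x _ => Finset.sum_comm
    _ ≤ ∑ x, ∑ w, traceLik q x * traceLik q' w * (s : ℝ≥0∞) := by
        gcongr
        exact sum_listProb_le hD _ _
    _ = s := by
        simp only [← Finset.sum_mul, ← Finset.sum_mul_sum, sum_traceLik_eq_one hq0 hq,
          sum_traceLik_eq_one hq'0 hq', one_mul]

lemma hitProb_le_one (hq0 : ∀ u k, 0 ≤ q u k) (hq : ∀ u, ∑ k, q u k = 1)
    (hq'0 : ∀ u k, 0 ≤ q' u k) (hq' : ∀ u, ∑ k, q' u k = 1) (u : ι) : hitProb D u q q' ≤ 1 := by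
  calc hitProb D u q q' ≤ ∑ x, ∑ w, traceLik q x * traceLik q' w := by
        exact Finset.sum_le_sum fun x _ => Finset.sum_le_sum fun w _ =>
          mul_le_of_le_one_right' (listProb_le_one D u x w)
    _ = 1 := by
        rw [← Finset.sum_mul_sum, sum_traceLik_eq_one hq0 hq, sum_traceLik_eq_one hq'0 hq', mul_one]

lemma hitProb_le_add_left (q₁ : ι → κ → ℝ) (hq'0 : ∀ u k, 0 ≤ q' u k)
    (hq' : ∀ u, ∑ k, q' u k = 1) (u : ι) :
    hitProb D u q q' ≤ hitProb D u q₁ q' +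
      ∑ x : ι → J → κ, (traceLik q x - traceLik q₁ x) := by
  rw [← mul_one (∑ x, _), ← sum_traceLik_eq_one (J := J') hq'0 hq', Finset.sum_mul_sum]
  simp only [hitProb, ← Finset.sum_add_distrib]
  refine Finset.sum_le_sum fun x _ => Finset.sum_le_sum fun w _ => ?_
  calc traceLik q x * traceLik q' w * listProb D u x w
      ≤ (traceLik q₁ x + (traceLik q x - traceLik q₁ x)) * traceLik q' w * listProb D u x w := by
        gcongr
        exact le_add_tsub
    _ ≤ _ := by
        rw [add_mul, add_mul]
        exact add_le_add le_rfl (mul_le_of_le_one_right' (listProb_le_one D u x w))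

lemma hitProb_le_add_right (q₁ : ι → κ → ℝ) (hq0 : ∀ u k, 0 ≤ q u k)
    (hq : ∀ u, ∑ k, q u k = 1) (u : ι) :
    hitProb D u q q' ≤ hitProb D u q q₁ +
      ∑ w : ι → J' → κ, (traceLik q' w - traceLik q₁ w) := by
  rw [← one_mul (∑ w, _), ← sum_traceLik_eq_one (J := J) hq0 hq, Finset.sum_mul_sum]
  simp only [hitProb, ← Finset.sum_add_distrib]
  refine Finset.sum_le_sum fun x _ => Finset.sum_le_sum fun w _ => ?_
  calc traceLik q x * traceLik q' w * listProb D u x w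
      ≤ traceLik q x * (traceLik q₁ w + (traceLik q' w - traceLik q₁ w)) * listProb D u x w := by
        gcongr
        exact le_add_tsub
    _ ≤ _ := by
        rw [mul_add, add_mul]
        exact add_le_add le_rfl (mul_le_of_le_one_right' (listProb_le_one D u x w))

end Hitting

/-! ### Exchangeability and cellmates -/

section Cellmates

variable {ι C : Type*} [Fintype ι] [DecidableEq C]

/-- The users sharing the cell of user `i`, where `c` assigns a cell to each user. -/
def cellmates (c : ι → C) (i : ι) : Finset ι := {u | c u = c i}

lemma card_cellmates_pos (c : ι → C) (i : ι) : 0 < #(cellmates c i) :=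
  Finset.card_pos.2 ⟨i, by simp [cellmates]⟩

lemma card_cellmates_comp_perm (c : ι → C) (τ : Equiv.Perm ι) (i : ι) :
    #(cellmates (c ∘ τ) i) = #(cellmates c (τ i)) :=
  Finset.card_equiv τ fun u => by simp [cellmates]

lemma card_cellmates_lt_le [Fintype C] (c : ι → C) (K : ℕ) :
    #{u | #(cellmates c u) < K} ≤ K * Fintype.card C := by
  refine Finset.card_le_mul_card_image_of_maps_to (f := c) (fun _ _ => Finset.mem_univ _) K
    fun b _ => ?_
  rcases Finset.eq_empty_or_nonempty ({u ∈ ({u | #(cellmates c u) < K} : Finset ι) | c u = b})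
    with hempty | ⟨u, hu⟩
  · simp [hempty]
  · simp only [Finset.mem_filter, Finset.mem_univ, true_and] at hu
    refine (Finset.card_le_card fun v hv => ?_).trans hu.1.le
    exact Finset.mem_filter_univ .. |>.2 ((Finset.mem_filter.1 hv).2.trans hu.2.symm)

variable (K : ℕ) (c₀ : C)

/-- The uniform probability weights on the cellmates of user `i`, replaced by `0` when `i` lies in
the discarded cell `c₀` or has fewer than `K` cellmates. -/
noncomputable def cellWeight (i u : ι) (c : ι → C) : ℝ≥0∞ :=
  if c i ≠ c₀ ∧ K ≤ #(cellmates c i) ∧ c u = c i then (#(cellmates c i) : ℝ≥0∞)⁻¹ else 0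

variable {K c₀} in
lemma cellWeight_ne_zero {i u : ι} {c : ι → C} (h : cellWeight K c₀ i u c ≠ 0) :
    c i ≠ c₀ ∧ c u = c i := by
  by_contra hc
  exact h (if_neg fun hcond => hc ⟨hcond.1, hcond.2.2⟩)

lemma cellWeight_le (i u : ι) (c : ι → C) : cellWeight K c₀ i u c ≤ (K : ℝ≥0∞)⁻¹ := by
  unfold cellWeight
  split_ifs with h
  · exact ENNReal.inv_le_inv.2 (by exact_mod_cast h.2.1)
  · exact zero_le

lemma sum_cellWeight (i : ι) (c : ι → C) :
    ∑ u, cellWeight K c₀ i u c = if c i ≠ c₀ ∧ K ≤ #(cellmates c i) then 1 else 0 := by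
  split_ifs with h
  · simp only [cellWeight, h.1, h.2, ne_eq, not_false_eq_true, true_and, ← Finset.sum_filter,
      Finset.sum_const, nsmul_eq_mul]
    exact ENNReal.mul_inv_cancel (by exact_mod_cast (card_cellmates_pos c i).ne')
      (ENNReal.natCast_ne_top _)
  · exact Finset.sum_eq_zero fun u _ => if_neg fun hcond => h ⟨hcond.1, hcond.2.1⟩

lemma le_ite_add_ite_add_sum_cellWeight_mul {g : ℝ≥0∞} (hg : g ≤ 1) (i : ι) (c : ι → C) :
    g ≤ (if c i = c₀ then 1 else 0) + (if #(cellmates c i) < K then 1 else 0) +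
      ∑ u, cellWeight K c₀ i u c * g := by
  rw [← Finset.sum_mul, sum_cellWeight]
  by_cases h₀ : c i = c₀
  · simp only [h₀, if_true, add_assoc]
    exact hg.trans le_self_add
  · by_cases hK : #(cellmates c i) < K
    · simpa [h₀, hK, not_le.2 hK] using hg
    · simp [h₀, hK, not_lt.1 hK]

lemma cellWeight_comp_swap [DecidableEq ι] (i u : ι) (c : ι → C) :
    cellWeight K c₀ i u (c ∘ Equiv.swap i u) = cellWeight K c₀ i u c := by
  by_cases h : c u = c i
  · rw [Equiv.comp_swap_eq_update, ← h, Function.update_eq_self, h, Function.update_eq_self]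
  · have hzero (c : ι → C) (h : c u ≠ c i) : cellWeight K c₀ i u c = 0 :=
      by_contra fun h0 => h (cellWeight_ne_zero h0).2
    rw [hzero c h, hzero]
    simpa using Ne.symm h

end Cellmates

section Exchangeability

variable {ι E C : Type*} [Fintype ι] [MeasurableSpace E] {μP : Measure E}
  [IsProbabilityMeasure μP]

lemma lintegral_pi_comp_perm (τ : Equiv.Perm ι) (g : (ι → E) → ℝ≥0∞) :
    ∫⁻ p, g (p ∘ τ) ∂(Measure.pi fun _ : ι => μP) = ∫⁻ p, g p ∂(Measure.pi fun _ : ι => μP) :=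
  (measurePreserving_arrowCongr' (fun _ : ι => μP) (fun _ => μP) τ.symm (MeasurableEquiv.refl E)
    fun _ => MeasurePreserving.id _).lintegral_comp_emb (MeasurableEquiv.measurableEmbedding _) g

lemma lintegral_mul_le_add_of_comp_perm {τ : Equiv.Perm ι} {h g g' : (ι → E) → ℝ≥0∞} {ε : ℝ≥0∞}
    (hh : Measurable h) (hτ : ∀ p, h (p ∘ τ) = h p)
    (hg : ∀ᵐ p ∂(Measure.pi fun _ : ι => μP), h p ≠ 0 → g p ≤ g' (p ∘ τ) + ε) :
    ∫⁻ p, h p * g p ∂(Measure.pi fun _ : ι => μP) ≤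
      ∫⁻ p, h p * g' p ∂(Measure.pi fun _ : ι => μP) +
        ε * ∫⁻ p, h p ∂(Measure.pi fun _ : ι => μP) := by
  calc ∫⁻ p, h p * g p ∂(Measure.pi fun _ : ι => μP)
      ≤ ∫⁻ p, h (p ∘ τ) * g' (p ∘ τ) + ε * h p ∂(Measure.pi fun _ : ι => μP) := by
        refine lintegral_mono_ae (hg.mono fun p hp => ?_)
        rcases eq_or_ne (h p) 0 with h0 | h0
        · simp [h0]
        · rw [hτ, mul_comm ε, ← mul_add]
          exact mul_le_mul_right (hp h0) _
    _ = _ := by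
        rw [lintegral_add_right _ (hh.const_mul ε), lintegral_const_mul ε hh,
          lintegral_pi_comp_perm τ fun p => h p * g' p]

variable [MeasurableSpace C] [MeasurableSingletonClass C] {cell : E → C}

lemma measurable_of_cells {ι β : Type*} [Finite ι] [Finite C] [MeasurableSpace β]
    (hcell : Measurable cell) (F : (ι → C) → β) : Measurable fun p : ι → E => F (cell ∘ p) :=
  Measurable.of_discrete.comp
    (measurable_pi_lambda _ fun u => hcell.comp (measurable_pi_apply u))

lemma sum_lintegral_cellWeight_mul_le [Finite C] [DecidableEq C] (hcell : Measurable cell) {i : ι}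
    {K : ℕ} {c₀ : C} {G : ι → (ι → E) → ℝ≥0∞} (hG : ∀ u, Measurable (G u)) {s : ℝ≥0∞}
    (hGs : ∀ᵐ p ∂(Measure.pi fun _ : ι => μP), ∑ u, G u p ≤ s) :
    ∑ u, ∫⁻ p, cellWeight K c₀ i u (cell ∘ p) * G u p ∂(Measure.pi fun _ : ι => μP) ≤ s / K := by
  calc ∑ u, ∫⁻ p, cellWeight K c₀ i u (cell ∘ p) * G u p ∂(Measure.pi fun _ : ι => μP)
      = ∫⁻ p, ∑ u, cellWeight K c₀ i u (cell ∘ p) * G u p ∂(Measure.pi fun _ : ι => μP) :=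
        (lintegral_finsetSum _ fun u _ => (measurable_of_cells hcell _).mul (hG u)).symm
    _ ≤ ∫⁻ _, s / K ∂(Measure.pi fun _ : ι => μP) := by
        refine lintegral_mono_ae (hGs.mono fun p hp => ?_)
        calc ∑ u, cellWeight K c₀ i u (cell ∘ p) * G u p ≤ ∑ u, (K : ℝ≥0∞)⁻¹ * G u p := by
              gcongr
              exact cellWeight_le K c₀ i _ _
          _ = (∑ u, G u p) / K := by rw [← Finset.mul_sum, mul_comm, div_eq_mul_inv]
          _ ≤ s / K := by gcongr
    _ = s / K := by simp

lemma lintegral_le_measure_add_measure_add_sum_cellWeight_mul [Finite C] [DecidableEq C]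
    (hcell : Measurable cell) (i : ι) (K : ℕ) (c₀ : C) {g : (ι → E) → ℝ≥0∞} (hg : Measurable g)
    (hg1 : ∀ᵐ p ∂(Measure.pi fun _ : ι => μP), g p ≤ 1) :
    ∫⁻ p, g p ∂(Measure.pi fun _ : ι => μP) ≤
      μP (cell ⁻¹' {c₀}) +
        (Measure.pi fun _ : ι => μP) {p | #(cellmates (cell ∘ p) i) < K} +
        ∑ u, ∫⁻ p, cellWeight K c₀ i u (cell ∘ p) * g p ∂(Measure.pi fun _ : ι => μP) := by
  set ν := Measure.pi fun _ : ι => μP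
  have hbad : MeasurableSet {p : ι → E | cell (p i) = c₀} :=
    measurable_of_cells hcell (fun c => c i) (measurableSet_singleton c₀)
  have hfew : MeasurableSet {p : ι → E | #(cellmates (cell ∘ p) i) < K} :=
    measurableSet_lt (measurable_of_cells hcell fun c => #(cellmates c i)) measurable_const
  calc ∫⁻ p, g p ∂ν
      ≤ ∫⁻ p, {p | cell (p i) = c₀}.indicator 1 p +
          {p | #(cellmates (cell ∘ p) i) < K}.indicator 1 p +
          ∑ u, cellWeight K c₀ i u (cell ∘ p) * g p ∂ν :=
        lintegral_mono_ae <| hg1.mono fun p hp => by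
          simpa only [Set.indicator_apply, Set.mem_ofPred_eq, Pi.one_apply, Function.comp_apply]
            using le_ite_add_ite_add_sum_cellWeight_mul K c₀ hp i (cell ∘ p)
    _ = ν {p | cell (p i) = c₀} + ν {p | #(cellmates (cell ∘ p) i) < K} +
          ∑ u, ∫⁻ p, cellWeight K c₀ i u (cell ∘ p) * g p ∂ν := by
        rw [lintegral_add_left (f := fun p => _ + _)
            ((measurable_one.indicator hbad).add (measurable_one.indicator hfew)),
          lintegral_add_left (measurable_one.indicator hbad), lintegral_indicator_one hbad,
          lintegral_indicator_one hfew, lintegral_finsetSum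
            (f := fun u p => cellWeight K c₀ i u (cell ∘ p) * g p) _
            fun u _ => (measurable_of_cells hcell _).mul hg]
    _ = _ := by
        congr 2
        exact (measurePreserving_eval (fun _ : ι => μP) i).measure_preimage
          (hcell (measurableSet_singleton c₀)).nullMeasurableSet

variable [Fintype C]

lemma measure_card_cellmates_lt_le [DecidableEq C] (hcell : Measurable cell) (i : ι) (K : ℕ) :
    (Measure.pi fun _ : ι => μP) {p | #(cellmates (cell ∘ p) i) < K} ≤
      (K * Fintype.card C : ℕ) / (Fintype.card ι : ℝ≥0∞) := by
  classical
  have : Nonempty ι := ⟨i⟩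
  set ν := Measure.pi fun _ : ι => μP
  let few (u : ι) : (ι → C) → ℝ≥0∞ := {c | #(cellmates c u) < K}.indicator 1
  have hfew (u : ι) : Measurable fun p : ι → E => few u (cell ∘ p) := measurable_of_cells hcell _
  have hexch (u : ι) : ∫⁻ p, few u (cell ∘ p) ∂ν = ∫⁻ p, few i (cell ∘ p) ∂ν := by
    rw [← lintegral_pi_comp_perm (Equiv.swap i u)]
    simp only [few, Set.indicator_apply, Set.mem_ofPred_eq, Pi.one_apply, ν,
      ← Function.comp_assoc, card_cellmates_comp_perm, Equiv.swap_apply_right]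
  have hmeas : ν {p | #(cellmates (cell ∘ p) i) < K} = ∫⁻ p, few i (cell ∘ p) ∂ν := by
    rw [← lintegral_indicator_one]
    · rfl
    · exact measurableSet_lt (measurable_of_cells hcell fun c => #(cellmates c i)) measurable_const
  rw [hmeas, ENNReal.le_div_iff_mul_le (by simp) (by simp)]
  calc (∫⁻ p, few i (cell ∘ p) ∂ν) * Fintype.card ι
      = ∫⁻ p, ∑ u, few u (cell ∘ p) ∂ν := by
        rw [lintegral_finsetSum _ fun u _ => hfew u]
        simp only [hexch, Finset.sum_const, Finset.card_univ, nsmul_eq_mul, mul_comm]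
    _ ≤ ∫⁻ _, (K * Fintype.card C : ℕ) ∂ν := by
        refine lintegral_mono fun p => ?_
        simp only [few, Set.indicator_apply, Set.mem_ofPred_eq, Pi.one_apply, Finset.sum_boole]
        exact_mod_cast card_cellmates_lt_le (cell ∘ p) K
    _ = (K * Fintype.card C : ℕ) := by simp [ν]

/-- A typical user can be confused with each of its cellmates, so it cannot do better than their
average. -/
theorem lintegral_le_of_cellmates [DecidableEq ι] (hcell : Measurable cell) (i : ι) (K : ℕ)
    (c₀ : C) {G : ι → (ι → E) → ℝ≥0∞} (hG : ∀ u, Measurable (G u)) {s ε : ℝ≥0∞}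
    (hG1 : ∀ᵐ p ∂(Measure.pi fun _ : ι => μP), G i p ≤ 1)
    (hGs : ∀ᵐ p ∂(Measure.pi fun _ : ι => μP), ∑ u, G u p ≤ s)
    (τ : ι → Equiv.Perm ι) (hτ : ∀ u, τ u = 1 ∨ τ u = Equiv.swap i u)
    (hle : ∀ᵐ p ∂(Measure.pi fun _ : ι => μP), ∀ u, cell (p i) ≠ c₀ → cell (p u) = cell (p i) →
      G i p ≤ G u (p ∘ τ u) + ε) :
    ∫⁻ p, G i p ∂(Measure.pi fun _ : ι => μP) ≤
      μP (cell ⁻¹' {c₀}) + (K * Fintype.card C : ℕ) / (Fintype.card ι : ℝ≥0∞) + (s / K + ε) := by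
  classical
  set ν := Measure.pi fun _ : ι => μP
  let h (u : ι) (p : ι → E) : ℝ≥0∞ := cellWeight K c₀ i u (cell ∘ p)
  have hh (u : ι) : Measurable (h u) := measurable_of_cells hcell _
  have hinv (u : ι) (p : ι → E) : h u (p ∘ τ u) = h u p := by
    rcases hτ u with hu | hu
    · simp [hu]
    · simp only [h, hu, ← Function.comp_assoc, cellWeight_comp_swap]
  have hconf (u : ι) : ∫⁻ p, h u p * G i p ∂ν ≤ ∫⁻ p, h u p * G u p ∂ν + ε * ∫⁻ p, h u p ∂ν := by
    refine lintegral_mul_le_add_of_comp_perm (hh u) (hinv u) (hle.mono fun p hp h0 => ?_)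
    exact hp u (cellWeight_ne_zero h0).1 (cellWeight_ne_zero h0).2
  have hweight : ∑ u, ∫⁻ p, h u p ∂ν ≤ 1 := by
    rw [← lintegral_finsetSum _ fun u _ => hh u]
    refine (lintegral_mono (g := 1) fun p => ?_).trans_eq (by simp [ν])
    simp only [h, sum_cellWeight]
    split_ifs <;> simp
  refine (lintegral_le_measure_add_measure_add_sum_cellWeight_mul hcell i K c₀ (hG i) hG1).trans ?_
  gcongr
  · exact measure_card_cellmates_lt_le hcell i K
  · refine (Finset.sum_le_sum fun u _ => hconf u).trans ?_
    rw [Finset.sum_add_distrib, ← Finset.mul_sum]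
    exact add_le_add (sum_lintegral_cellWeight_mul_le hcell hG hGs)
      (mul_le_of_le_one_right' hweight)

end Exchangeability

/-! ### Hitting probability of short lists -/

section ListHitting

variable {ι κ J J' : Type*} [Fintype ι] [DecidableEq ι] [Fintype κ] [Fintype J] [DecidableEq J]
  [Fintype J'] [DecidableEq J'] {D : (ι → J' → κ) × (ι → J → κ) → Finset ι} {i u : ι} {η Δ : ℝ}

/-- Short actual traces: the label of `i` in the given traces is the label of `u` after swapping
the actual traces of `i` and `u`, which hardly changes their law. -/
lemma hitProb_le_of_actual {q : ι → κ → ℝ} (hq0 : ∀ u k, 0 < q u k) (hq : ∀ u, ∑ k, q u k = 1)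
    (hη : 0 < η) (hi : ∀ k, η ≤ q i k) (hu : ∀ k, η ≤ q u k) (hΔ : ∀ k, |q i k - q u k| ≤ Δ) :
    hitProb D i q q ≤ hitProb D u q q + ENNReal.ofReal
      √(Real.exp (2 * (Fintype.card J * (Fintype.card κ * (Δ ^ 2 / η)))) - 1) := by
  rw [← hitProb_comp_swap D i u]
  refine (hitProb_le_add_left D q (fun u k => (hq0 u k).le) hq u).trans ?_
  gcongr
  exact sum_traceLik_comp_swap_sub_le hq0 hq hη hi hu hΔ

/-- Short training traces: the training traces of `i` and `u` can be swapped as well, after which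
the two users have exchanged their roles completely. -/
lemma hitProb_le_of_training {q : ι → κ → ℝ} (hq0 : ∀ u k, 0 < q u k) (hq : ∀ u, ∑ k, q u k = 1)
    (hη : 0 < η) (hi : ∀ k, η ≤ q i k) (hu : ∀ k, η ≤ q u k) (hΔ : ∀ k, |q i k - q u k| ≤ Δ) :
    hitProb D i q q ≤ hitProb D u (q ∘ Equiv.swap i u) (q ∘ Equiv.swap i u) + ENNReal.ofReal
      √(Real.exp (2 * (Fintype.card J' * (Fintype.card κ * (Δ ^ 2 / η)))) - 1) := by
  rw [hitProb_comp_swap D i u]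
  refine (hitProb_le_add_right D (q ∘ Equiv.swap i u) (fun u k => (hq0 u k).le) hq i).trans ?_
  gcongr
  have hswap : (q ∘ Equiv.swap i u) ∘ Equiv.swap i u = q := funext fun v => by simp
  conv_lhs => enter [2, w, 1]; rw [← hswap]
  refine sum_traceLik_comp_swap_sub_le (fun v => hq0 _) (fun v => hq _) hη ?_ ?_ ?_
  · simpa using hu
  · simpa using hi
  · simpa [abs_sub_comm] using hΔ

variable {E C : Type*} [MeasurableSpace E] {μP : Measure E} [IsProbabilityMeasure μP]
  [Fintype C] [MeasurableSpace C] [MeasurableSingletonClass C]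

theorem lintegral_hitProb_le {Q : E → κ → ℝ} (hQm : ∀ k, Measurable fun e => Q e k)
    (hQ0 : ∀ᵐ e ∂μP, ∀ k, 0 < Q e k) (hQ1 : ∀ e, ∑ k, Q e k = 1) {cell : E → C}
    (hcell : Measurable cell) {c₀ : C} (hη : 0 < η) (hcellη : ∀ e, cell e ≠ c₀ → ∀ k, η ≤ Q e k)
    (hcellΔ : ∀ e e', cell e ≠ c₀ → cell e' = cell e → ∀ k, |Q e k - Q e' k| ≤ Δ)
    {s : ℕ} (hD : ∀ b, #(D b) ≤ s) (i : ι) (K : ℕ) :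
    ∫⁻ p, hitProb D i (Q ∘ p) (Q ∘ p) ∂(Measure.pi fun _ : ι => μP) ≤
      μP (cell ⁻¹' {c₀}) + (K * Fintype.card C : ℕ) / (Fintype.card ι : ℝ≥0∞) +
        (s / K + ENNReal.ofReal √(Real.exp (2 *
          ((min (Fintype.card J) (Fintype.card J') : ℕ) *
            (Fintype.card κ * (Δ ^ 2 / η)))) - 1)) := by
  have hpos : ∀ᵐ p ∂(Measure.pi fun _ : ι => μP), ∀ u k, 0 < Q (p u) k :=
    ae_all_iff.2 fun u => (measurePreserving_eval (fun _ : ι => μP) u).quasiMeasurePreserving.ae hQ0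
  have hbound (ε : ℝ≥0∞) := lintegral_le_of_cellmates hcell i K c₀ (ε := ε)
    (fun u => measurable_hitProb D hQm u) (s := s)
    (hpos.mono fun p hp => hitProb_le_one D (fun u k => (hp u k).le) (fun u => hQ1 _)
      (fun u k => (hp u k).le) (fun u => hQ1 _) i)
    (hpos.mono fun p hp => sum_hitProb_le D hD (fun u k => (hp u k).le) (fun u => hQ1 _)
      (fun u k => (hp u k).le) (fun u => hQ1 _))
  rcases le_total (Fintype.card J) (Fintype.card J') with hJ | hJ
  · rw [min_eq_left hJ]
    refine hbound _ (fun _ => 1) (fun u => Or.inl rfl) (hpos.mono fun p hp u hi hu => ?_)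
    exact hitProb_le_of_actual hp (fun u => hQ1 _) hη (hcellη _ hi) (hcellη _ (hu ▸ hi))
      (hcellΔ _ _ hi hu)
  · rw [min_eq_right hJ]
    refine hbound _ (Equiv.swap i) (fun u => Or.inr rfl) (hpos.mono fun p hp u hi hu => ?_)
    exact hitProb_le_of_training hp (fun u => hQ1 _) hη (hcellη _ hi) (hcellη _ (hu ▸ hi))
      (hcellΔ _ _ hi hu)

end ListHitting

/-! ### The `r`-state model -/

section Parameters

variable {r : ℕ} {p q : Fin (r - 1) → ℝ} {η : ℝ}

lemma fullProb_zero (hr : 0 < r) (p : Fin (r - 1) → ℝ) : fullProb r p ⟨0, hr⟩ = 1 - ∑ j, p j :=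
  rfl

lemma fullProb_succ (p : Fin (r - 1) → ℝ) (j : Fin (r - 1)) :
    fullProb r p ⟨j + 1, by omega⟩ = p j :=
  rfl

lemma sum_fullProb (hr : 0 < r) (p : Fin (r - 1) → ℝ) : ∑ i, fullProb r p i = 1 := by
  obtain ⟨d, rfl⟩ := Nat.exists_eq_add_one.2 hr
  simp [Fin.sum_univ_succ, fullProb]

lemma fullProb_pos_iff : (∀ i, 0 < fullProb r p i) ↔ p ∈ simplexRegion (r - 1) := by
  refine ⟨fun h => ⟨fun j => fullProb_succ p j ▸ h _, ?_⟩, fun h i => ?_⟩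
  · rcases r.eq_zero_or_pos with rfl | hr
    · exact Finset.sum_empty.trans_lt one_pos
    · exact sub_pos.1 (fullProb_zero hr p ▸ h ⟨0, hr⟩)
  · unfold fullProb
    split_ifs
    exacts [sub_pos.2 h.2, h.1 _]

lemma measurable_fullProb (i : Fin r) : Measurable fun p => fullProb r p i := by
  unfold fullProb
  split_ifs <;> fun_prop

lemma abs_fullProb_sub_le {ε : ℝ} (hε : 0 ≤ ε) (h : ∀ j, |p j - q j| ≤ ε) (i : Fin r) :
    |fullProb r p i - fullProb r q i| ≤ r * ε := by
  have hr : (1 : ℝ) ≤ r := by exact_mod_cast i.pos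
  unfold fullProb
  split_ifs
  · calc |(1 - ∑ j, p j) - (1 - ∑ j, q j)| = |∑ j, (p j - q j)| := by
          rw [sub_sub_sub_cancel_left, abs_sub_comm, Finset.sum_sub_distrib]
      _ ≤ ∑ j, |p j - q j| := Finset.abs_sum_le_sum_abs _ _
      _ ≤ (r - 1 : ℕ) * ε := by
          simpa using Finset.sum_le_card_nsmul Finset.univ _ ε fun j _ => h j
      _ ≤ r * ε := by
          gcongr
          exact Nat.sub_le _ _
  · exact (h _).trans (le_mul_of_one_le_left hε hr)

/-- The parameters all of whose `r` probabilities, including that of the value `0`, are at least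
`η`. The probability vectors of two nearby typical parameters are close in `χ²`-distance. -/
def typicalParams (r : ℕ) (η : ℝ) : Set (Fin (r - 1) → ℝ) :=
  {p | ∀ i, η ≤ fullProb r p i}

lemma measurableSet_typicalParams (r : ℕ) (η : ℝ) : MeasurableSet (typicalParams r η) := by
  simp only [typicalParams, Set.ofPred_forall]
  exact MeasurableSet.iInter fun i => measurableSet_le measurable_const (measurable_fullProb i)

lemma mem_simplexRegion_of_mem_typicalParams (hη : 0 < η) (hp : p ∈ typicalParams r η) :
    p ∈ simplexRegion (r - 1) :=
  fullProb_pos_iff.1 fun i => hη.trans_le (hp i)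

lemma exists_measure_compl_typicalParams_le {μP : Measure (Fin (r - 1) → ℝ)}
    [IsFiniteMeasure μP] (hμP : ∀ᵐ x ∂μP, x ∈ simplexRegion (r - 1)) {ε : ℝ≥0∞} (hε : 0 < ε) :
    ∃ η > 0, μP (typicalParams r η)ᶜ ≤ ε := by
  let η (k : ℕ) : ℝ := 1 / (k + 1)
  have hη (k : ℕ) : 0 < η k := Nat.one_div_pos_of_nat
  have hanti : Antitone fun k => (typicalParams r (η k))ᶜ := fun a b hab =>
    Set.compl_subset_compl.2 fun p hp i => (Nat.one_div_le_one_div hab).trans (hp i)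
  have hnull : μP (⋂ k, (typicalParams r (η k))ᶜ) = 0 := by
    refine measure_mono_null (t := (simplexRegion (r - 1))ᶜ) (fun p hp hsimplex => ?_) hμP
    have hev : ∀ᶠ k in atTop, ∀ i, η k < fullProb r p i := eventually_all.2 fun i =>
      tendsto_one_div_add_atTop_nhds_zero_nat.eventually_lt_const (fullProb_pos_iff.2 hsimplex i)
    obtain ⟨k, hk⟩ := hev.exists
    exact Set.mem_iInter.1 hp k fun i => (hk i).le
  have hlim := tendsto_measure_iInter_atTop
    (fun k => (measurableSet_typicalParams r (η k)).compl.nullMeasurableSet) hanti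
    ⟨0, measure_ne_top μP _⟩
  rw [hnull] at hlim
  obtain ⟨k, hk⟩ := (hlim.eventually_lt_const hε).exists
  exact ⟨η k, hη k, hk.le⟩

lemma measurableSet_simplexRegion (d : ℕ) : MeasurableSet (simplexRegion d) := by
  simp only [simplexRegion, Set.ofPred_and, Set.ofPred_forall]
  refine (MeasurableSet.iInter fun i => ?_).inter ?_
  · exact measurableSet_lt measurable_const (measurable_pi_apply i)
  · exact measurableSet_lt (by fun_prop) measurable_const

lemma ae_mem_simplexRegion {d : ℕ} {f : (Fin d → ℝ) → ℝ} (hf : ∀ x ∉ simplexRegion d, f x = 0) :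
    ∀ᵐ x ∂volume.withDensity fun x => ENNReal.ofReal (f x), x ∈ simplexRegion d := by
  have hmeas := (measurableSet_simplexRegion d).compl
  change volume.withDensity _ (simplexRegion d)ᶜ = 0
  rw [withDensity_apply _ hmeas,
    setLIntegral_congr_fun hmeas (g := 0) fun x hx => by simp [hf x hx]]
  simp

end Parameters

section Grid

variable {d : ℕ}

/-- The cell of `x ∈ [0,1]^d` in the grid of mesh `1 / k`. Rounding up keeps the index
`0` for the coordinate `0`, so that the cell `0` is left for atypical parameters. Points outside
the cube get a meaningless cell. -/
noncomputable def gridCell (k : ℕ) (x : Fin d → ℝ) : Fin d → Fin (k + 1) :=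
  fun j => Fin.ofNat (k + 1) ⌈k * x j⌉₊

lemma measurable_gridCell (k : ℕ) : Measurable (gridCell k : (Fin d → ℝ) → _) :=
  measurable_pi_lambda _ fun j => (Measurable.of_discrete (f := Fin.ofNat (k + 1))).comp <|
    Nat.measurable_ceil.comp ((measurable_pi_apply j).const_mul _)

lemma val_gridCell (k : ℕ) {x : Fin d → ℝ} (hx : x ∈ simplexRegion d) (j : Fin d) :
    (gridCell k x j : ℕ) = ⌈k * x j⌉₊ := by
  have hj : x j ≤ 1 :=
    (Finset.single_le_sum (fun i _ => (hx.1 i).le) (Finset.mem_univ j)).trans hx.2.le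
  exact Nat.mod_eq_of_lt <| Nat.lt_succ_of_le <| Nat.ceil_le.2 <|
    mul_le_of_le_one_right k.cast_nonneg hj

variable {k : ℕ} {x y : Fin d → ℝ}

lemma gridCell_ne_zero (hd : 0 < d) (hk : 0 < k) (hx : x ∈ simplexRegion d) :
    gridCell k x ≠ 0 := fun h => by
  have hceil : 0 < ⌈k * x ⟨0, hd⟩⌉₊ := Nat.ceil_pos.2 (mul_pos (by exact_mod_cast hk) (hx.1 _))
  rw [← val_gridCell k hx, h] at hceil
  exact hceil.ne rfl

lemma abs_sub_le_of_gridCell_eq (hk : 0 < k) (hx : x ∈ simplexRegion d)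
    (hy : y ∈ simplexRegion d) (h : gridCell k x = gridCell k y) (j : Fin d) :
    |x j - y j| ≤ 1 / k := by
  have hk' : (0 : ℝ) < k := by exact_mod_cast hk
  have hceil : ⌈k * x j⌉₊ = ⌈k * y j⌉₊ := by rw [← val_gridCell k hx, ← val_gridCell k hy, h]
  have hclose : |k * x j - k * y j| ≤ 1 := by
    have hx₁ := Nat.le_ceil (k * x j)
    have hx₂ := Nat.ceil_lt_add_one (mul_nonneg hk'.le (hx.1 j).le)
    have hy₁ := Nat.le_ceil (k * y j)
    have hy₂ := Nat.ceil_lt_add_one (mul_nonneg hk'.le (hy.1 j).le)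
    rw [hceil] at hx₁ hx₂
    exact abs_le.2 ⟨by linarith, by linarith⟩
  rwa [← mul_sub, abs_mul, abs_of_pos hk', mul_comm, ← le_div_iff₀ hk'] at hclose

end Grid

section Law

variable {n m l r : ℕ}

instance isFiniteMeasure_catMeasure (q : Fin r → ℝ) : IsFiniteMeasure (catMeasure r q) :=
  ⟨by simp [catMeasure, ENNReal.sum_lt_top]⟩

lemma catMeasure_singleton (q : Fin r → ℝ) (i : Fin r) :
    catMeasure r q {i} = ENNReal.ofReal (q i) := by
  simp [catMeasure, Measure.finsetSum_apply, Set.indicator_apply]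

lemma pi_catMeasure_singleton (q : Fin n → Fin r → ℝ) (x : Fin n → Fin m → Fin r) :
    (Measure.pi fun u => Measure.pi fun _ : Fin m => catMeasure r (q u)) {x} = traceLik q x := by
  simp only [Measure.pi_singleton, catMeasure_singleton, traceLik]

/-- Only an inequality, because the kernel in `rStateLaw` is not shown to be measurable. -/
lemma rStateLaw_univ_prod_singleton_le (μP : Measure (Fin (r - 1) → ℝ))
    (x : Fin n → Fin m → Fin r) (w : Fin n → Fin l → Fin r) :
    rStateLaw n m l r μP (Set.univ ×ˢ ({x} ×ˢ {w})) ≤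
      ∫⁻ p, traceLik (fullProb r ∘ p) x * traceLik (fullProb r ∘ p) w
        ∂(Measure.pi fun _ : Fin n => μP) := by
  refine (Measure.bind_apply_le _ ?_).trans_eq (lintegral_congr fun p => ?_)
  · exact .prod .univ ((measurableSet_singleton x).prod (measurableSet_singleton w))
  · rw [Measure.prod_prod, Measure.prod_prod, measure_univ, one_mul]
    exact congrArg₂ _ (pi_catMeasure_singleton _ x) (pi_catMeasure_singleton _ w)

variable {Ω : Type*} [MeasurableSpace Ω] {μ : Measure Ω} {μP : Measure (Fin (r - 1) → ℝ)}
  {P : Ω → Fin n → Fin (r - 1) → ℝ} {X : Ω → Fin n → Fin m → Fin r}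
  {W : Ω → Fin n → Fin l → Fin r} {prm : Ω → Equiv.Perm (Fin n)}

theorem measure_mem_list_le
    (hjoint : ∀ (σ : Equiv.Perm (Fin n)) s, MeasurableSet s →
      μ {ω | prm ω = σ ∧ (P ω, X ω, W ω) ∈ s} = (n ! : ℝ≥0∞)⁻¹ * rStateLaw n m l r μP s)
    (D : (Fin n → Fin l → Fin r) × (Fin n → Fin m → Fin r) → Finset (Fin n)) (i : Fin n) :
    μ {ω | prm ω i ∈ D (W ω, fun v => X ω ((prm ω).symm v))} ≤
      ∫⁻ p, hitProb D i (fullProb r ∘ p) (fullProb r ∘ p) ∂(Measure.pi fun _ : Fin n => μP) := by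
  set ν := Measure.pi fun _ : Fin n => μP
  let listing (x : Fin n → Fin m → Fin r) (w : Fin n → Fin l → Fin r) :
    Finset (Equiv.Perm (Fin n)) := {σ | σ i ∈ D (w, x ∘ σ.symm)}
  calc μ {ω | prm ω i ∈ D (W ω, fun v => X ω ((prm ω).symm v))}
      ≤ μ (⋃ x, ⋃ w, ⋃ σ ∈ listing x w,
          {ω | prm ω = σ ∧ (P ω, X ω, W ω) ∈ Set.univ ×ˢ ({x} ×ˢ {w})}) := by
        refine measure_mono fun ω hω => ?_
        simp only [Set.mem_iUnion]
        exact ⟨X ω, W ω, prm ω, Finset.mem_filter_univ .. |>.2 hω, rfl, by simp⟩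
    _ ≤ ∑ x, ∑ w, ∑ σ ∈ listing x w,
          μ {ω | prm ω = σ ∧ (P ω, X ω, W ω) ∈ Set.univ ×ˢ ({x} ×ˢ {w})} := by
        refine (measure_iUnion_fintype_le _ _).trans (Finset.sum_le_sum fun x _ => ?_)
        refine (measure_iUnion_fintype_le _ _).trans (Finset.sum_le_sum fun w _ => ?_)
        exact measure_biUnion_finset_le _ _
    _ ≤ ∑ x, ∑ w, (∫⁻ p, traceLik (fullProb r ∘ p) x * traceLik (fullProb r ∘ p) w ∂ν) *
          listProb D i x w := by
        gcongr with x _ w _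
        simp only [hjoint _ _ (.prod .univ ((measurableSet_singleton x).prod
          (measurableSet_singleton w))), Finset.sum_const, nsmul_eq_mul]
        rw [← mul_assoc, ← div_eq_mul_inv, mul_comm]
        gcongr
        · exact rStateLaw_univ_prod_singleton_le μP x w
        · simp [listProb, listing]
    _ = ∫⁻ p, hitProb D i (fullProb r ∘ p) (fullProb r ∘ p) ∂ν :=
        (lintegral_hitProb D ν measurable_fullProb i).symm

variable [IsProbabilityMeasure μP]

theorem lintegral_hitProb_fullProb_le (hr : 2 ≤ r) (hμP : ∀ᵐ x ∂μP, x ∈ simplexRegion (r - 1))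
    {η : ℝ} (hη : 0 < η) {k : ℕ} (hk : 0 < k) {s : ℕ}
    {D : (Fin n → Fin l → Fin r) × (Fin n → Fin m → Fin r) → Finset (Fin n)}
    (hD : ∀ b, #(D b) ≤ s) (i : Fin n) (K : ℕ) :
    ∫⁻ p, hitProb D i (fullProb r ∘ p) (fullProb r ∘ p) ∂(Measure.pi fun _ : Fin n => μP) ≤
      μP (typicalParams r η)ᶜ + (K * (k + 1) ^ (r - 1) : ℕ) / (n : ℝ≥0∞) +
        (s / K + ENNReal.ofReal
          √(Real.exp (2 * ((min m l : ℕ) * (r * ((r * (1 / k)) ^ 2 / η)))) - 1)) := by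
  let cell : (Fin (r - 1) → ℝ) → Fin (r - 1) → Fin (k + 1) :=
    (typicalParams r η).indicator (gridCell k)
  have htypical {p} (hp : cell p ≠ 0) : p ∈ typicalParams r η := Set.mem_of_indicator_ne_zero hp
  have hatypical : cell ⁻¹' {0} ⊆ (typicalParams r η)ᶜ := fun p hp hpt =>
    gridCell_ne_zero (by omega) hk (mem_simplexRegion_of_mem_typicalParams hη hpt)
      ((Set.indicator_of_mem hpt _).symm.trans hp)
  have hclose (p p') (hp : cell p ≠ 0) (h : cell p' = cell p) (a) :
      |fullProb r p a - fullProb r p' a| ≤ r * (1 / k) := by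
    have hpt := htypical hp
    have hpt' := htypical (h ▸ hp)
    have hgrid : gridCell k p' = gridCell k p := by
      simpa only [cell, Set.indicator_of_mem, hpt, hpt'] using h
    exact abs_fullProb_sub_le (by positivity) (abs_sub_le_of_gridCell_eq hk
      (mem_simplexRegion_of_mem_typicalParams hη hpt)
      (mem_simplexRegion_of_mem_typicalParams hη hpt') hgrid.symm) a
  have hbound := lintegral_hitProb_le measurable_fullProb
    (hμP.mono fun p hp => fullProb_pos_iff.2 hp) (sum_fullProb (by omega))
    ((measurable_gridCell k).indicator (measurableSet_typicalParams r η)) hη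
    (fun p hp => htypical hp) hclose hD i K
  simp only [Fintype.card_fin, Fintype.card_fun] at hbound
  exact hbound.trans (by gcongr)

end Law

/-! ### Asymptotics -/

section Asymptotics

open Asymptotics Topology

/-- The value `k` is the geometric mean of `√q` and `a`, rounded up. -/
lemma exists_nat_isLittleO_between {F : Filter ℕ} {q a : ℕ → ℝ} (hq : ∀ n, 0 ≤ q n)
    (ha : Tendsto a F atTop) (hqa : q =o[F] fun n => a n ^ 2) :
    ∃ k : ℕ → ℕ, (∀ n, 0 < k n) ∧ (fun n => (k n + 1 : ℝ)) =o[F] a ∧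
      q =o[F] fun n => (k n : ℝ) ^ 2 := by
  have ha0 : ∀ᶠ n in F, 0 ≤ a n := ha.eventually_ge_atTop 0
  have hsqrt : (fun n => √(q n)) =o[F] a :=
    (hqa.sqrt (.of_forall fun n => sq_nonneg _)).congr' .rfl (ha0.mono fun n => Real.sqrt_sq)
  have hmean : (fun n => √(√(q n) * a n)) =o[F] a :=
    ((hsqrt.mul_isBigO (isBigO_refl a F)).sqrt (.of_forall fun n => mul_self_nonneg _)).congr' .rfl
      (ha0.mono fun n => Real.sqrt_mul_self)
  refine ⟨fun n => ⌊√(√(q n) * a n)⌋₊ + 1, fun n => Nat.succ_pos _, ?_, ?_⟩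
  · have htwo : (fun _ => 2 : ℕ → ℝ) =o[F] a :=
      isLittleO_const_left.2 (.inr (tendsto_norm_atTop_atTop.comp ha))
    refine (IsBigO.of_norm_le fun n => ?_).trans_isLittleO (hmean.add htwo)
    rw [Real.norm_of_nonneg (by positivity)]
    push_cast
    linarith [Nat.floor_le (√(q n) * a n).sqrt_nonneg]
  · have hprod : q =o[F] fun n => √(q n) * a n :=
      ((isBigO_refl _ F).mul_isLittleO hsqrt).congr_left fun n => Real.mul_self_sqrt (hq n)
    refine hprod.trans_isBigO (.of_bound' (ha0.mono fun n hn => ?_))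
    rw [Real.norm_of_nonneg (by positivity), Real.norm_of_nonneg (sq_nonneg _)]
    exact (Real.sqrt_le_left (by positivity)).1 <| by
      exact_mod_cast (Nat.lt_floor_add_one _).le

lemma isLittleO_rpow_sub {α : ℝ} (hα : 0 < α) (b : ℝ) :
    (fun n : ℕ => (n : ℝ) ^ (b - α)) =o[atTop] fun n : ℕ => (n : ℝ) ^ b := by
  have hone : (fun n : ℕ => (n : ℝ) ^ (-α)) =o[atTop] fun _ => (1 : ℝ) :=
    (isLittleO_one_iff ℝ).2 <| (tendsto_rpow_neg_atTop hα).comp tendsto_natCast_atTop_atTop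
  refine (hone.mul_isBigO (isBigO_refl (fun n : ℕ => (n : ℝ) ^ b) atTop)).congr' ?_
    (.of_forall fun n => one_mul _)
  filter_upwards [eventually_gt_atTop 0] with n hn
  rw [← Real.rpow_add (by exact_mod_cast hn), neg_add_eq_sub]

lemma isLittleO_min_of_le_rpow {m l : ℕ → ℕ} {b c α : ℝ} (hα : 0 < α)
    (h : (∀ n : ℕ, (m n : ℝ) ≤ c * (n : ℝ) ^ (b - α)) ∨
      ∀ n : ℕ, (l n : ℝ) ≤ c * (n : ℝ) ^ (b - α)) :
    (fun n => ((min (m n) (l n) : ℕ) : ℝ)) =o[atTop] fun n : ℕ => (n : ℝ) ^ b := by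
  refine (IsBigO.of_bound c (.of_forall fun n => ?_)).trans_isLittleO (isLittleO_rpow_sub hα b)
  rw [Real.norm_of_nonneg (Nat.cast_nonneg _), Real.norm_of_nonneg (by positivity), Nat.cast_min]
  exact h.elim (fun h => min_le_of_left_le (h n)) fun h => min_le_of_right_le (h n)

lemma tendsto_natCast_div_nhds_zero {u : ℕ → ℕ}
    (hu : (fun n => (u n : ℝ)) =o[atTop] fun n : ℕ => (n : ℝ)) :
    Tendsto (fun n => (u n : ℝ≥0∞) / n) atTop (𝓝 0) := by
  rw [← ENNReal.ofReal_zero]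
  refine (ENNReal.tendsto_ofReal hu.tendsto_div_nhds_zero).congr' ?_
  filter_upwards [eventually_gt_atTop 0] with n hn
  rw [ENNReal.ofReal_div_of_pos (by exact_mod_cast hn), ENNReal.ofReal_natCast,
    ENNReal.ofReal_natCast]

lemma tendsto_ofReal_sqrt_exp_sub_one {q k : ℕ → ℕ}
    (hqk : (fun n => (q n : ℝ)) =o[atTop] fun n => (k n : ℝ) ^ 2) (r η : ℝ) :
    Tendsto (fun n => ENNReal.ofReal √(Real.exp (2 * (q n * (r * ((r * (1 / k n)) ^ 2 / η)))) - 1))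
      atTop (𝓝 0) := by
  have hexponent : Tendsto (fun n => 2 * (q n * (r * ((r * (1 / k n)) ^ 2 / η)))) atTop (𝓝 0) := by
    have hscaled := hqk.tendsto_div_nhds_zero.const_mul (2 * (r * (r ^ 2 / η)))
    rw [mul_zero] at hscaled
    exact hscaled.congr fun n => by ring
  have hcont : Continuous fun t => ENNReal.ofReal √(Real.exp t - 1) :=
    ENNReal.continuous_ofReal.comp (by fun_prop)
  simpa [Function.comp_def] using (hcont.tendsto 0).comp hexponent

theorem eventually_lintegral_hitProb_fullProb_le {r : ℕ} (hr : 2 ≤ r)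
    {μP : Measure (Fin (r - 1) → ℝ)} [IsProbabilityMeasure μP]
    (hμP : ∀ᵐ x ∂μP, x ∈ simplexRegion (r - 1)) {m l : ℕ → ℕ}
    (hml : (fun n => ((min (m n) (l n) : ℕ) : ℝ)) =o[atTop] fun n : ℕ =>
      (n : ℝ) ^ (2 / ((r : ℝ) - 1))) (s : ℕ) {ε : ℝ≥0∞} (hε : 0 < ε) :
    ∀ᶠ n in atTop, ∀ D : (Fin n → Fin (l n) → Fin r) × (Fin n → Fin (m n) → Fin r) → Finset (Fin n),
      (∀ b, #(D b) ≤ s) → ∀ i, ∫⁻ p, hitProb D i (fullProb r ∘ p) (fullProb r ∘ p)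
        ∂(Measure.pi fun _ : Fin n => μP) ≤ ε := by
  obtain ⟨d, rfl⟩ : ∃ d, r = d + 1 := ⟨r - 1, by omega⟩
  have hd : d ≠ 0 := by omega
  have hε4 : 0 < ε / 2 / 2 := ENNReal.half_pos (ENNReal.half_pos hε.ne').ne'
  have hroot : Tendsto (fun n : ℕ => (n : ℝ) ^ (d : ℝ)⁻¹) atTop atTop :=
    (tendsto_rpow_atTop (by positivity)).comp tendsto_natCast_atTop_atTop
  obtain ⟨k, hk, hk_root, hq⟩ := exists_nat_isLittleO_between (fun n => Nat.cast_nonneg _) hroot <|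
    hml.congr_right fun n => by
      rw [← Real.rpow_natCast, ← Real.rpow_mul n.cast_nonneg]
      push_cast
      ring_nf
  obtain ⟨η, hη, hatypical⟩ := exists_measure_compl_typicalParams_le hμP hε4
  obtain ⟨K, hK⟩ := ENNReal.exists_nat_mul_gt hε4.ne' (ENNReal.natCast_ne_top s)
  have hlist : (s / K : ℝ≥0∞) ≤ ε / 2 / 2 := ENNReal.div_le_of_le_mul' hK.le
  have hcells : (fun n => ((K * (k n + 1) ^ d : ℕ) : ℝ)) =o[atTop] fun n : ℕ => (n : ℝ) := by
    push_cast
    exact ((hk_root.pow (Nat.pos_of_ne_zero hd)).const_mul_left K).congr_right fun n =>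
      Real.rpow_inv_natCast_pow n.cast_nonneg hd
  filter_upwards [(tendsto_natCast_div_nhds_zero hcells).eventually_le_const hε4,
    (tendsto_ofReal_sqrt_exp_sub_one hq (d + 1 : ℕ) η).eventually_le_const hε4]
    with n hfew hdist D hD i
  refine (lintegral_hitProb_fullProb_le hr hμP hη (hk n) hD i K).trans ?_
  calc _ ≤ ε / 2 / 2 + ε / 2 / 2 + (ε / 2 / 2 + ε / 2 / 2) :=
        add_le_add (add_le_add hatypical hfew) (add_le_add hlist hdist)
    _ = ε := by simp only [ENNReal.add_halves]

end Asymptotics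

theorem r_state_perfect_anonymity_general {r : ℕ} (hr : 2 ≤ r) {μP : Measure (Fin (r - 1) → ℝ)}
    [IsProbabilityMeasure μP] (hμP : ∀ᵐ x ∂μP, x ∈ simplexRegion (r - 1)) {m l : ℕ → ℕ}
    (hml : (fun n => ((min (m n) (l n) : ℕ) : ℝ)) =o[atTop] fun n : ℕ =>
      (n : ℝ) ^ (2 / ((r : ℝ) - 1)))
    {Ω : ℕ → Type*} [∀ n, MeasurableSpace (Ω n)] {μ : ∀ n, Measure (Ω n)}
    [∀ n, IsProbabilityMeasure (μ n)] {P : ∀ n, Ω n → Fin n → Fin (r - 1) → ℝ}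
    {X : ∀ n, Ω n → Fin n → Fin (m n) → Fin r} {W : ∀ n, Ω n → Fin n → Fin (l n) → Fin r}
    {prm : ∀ n, Ω n → Equiv.Perm (Fin n)} (hprm : ∀ n σ, MeasurableSet {ω | prm n ω = σ})
    (hjoint : ∀ n (σ : Equiv.Perm (Fin n)) s, MeasurableSet s →
      μ n {ω | prm n ω = σ ∧ (P n ω, X n ω, W n ω) ∈ s} =
        (n ! : ℝ≥0∞)⁻¹ * rStateLaw n (m n) (l n) r μP s) :
    Tendsto (fun n => shCondEntropy (μ n)
        (fun ω => if hn : 0 < n then ((prm n ω ⟨0, hn⟩ : Fin n) : ℕ) else 0)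
        (fun ω => (W n ω, fun v => X n ω ((prm n ω).symm v)))) atTop atTop := by
  refine tendsto_atTop.2 fun b => ?_
  obtain ⟨N, hN, hbN⟩ : ∃ N : ℕ, 0 < N ∧ b ≤ (1 - 1 / 2) * Real.log N :=
    ((eventually_gt_atTop 0).and <| (((Real.tendsto_log_atTop.comp
      tendsto_natCast_atTop_atTop).const_mul_atTop (by norm_num)).eventually_ge_atTop b)).exists
  filter_upwards [eventually_gt_atTop 0, eventually_lintegral_hitProb_fullProb_le hr hμP hml N
    (ε := ENNReal.ofReal (1 / 2)) (by simp)] with n hn hmiss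
  simp only [hn, ↓reduceDIte]
  refine hbN.trans ?_
  have hmeas (v : Fin n) : MeasurableSet ((fun ω => prm n ω ⟨0, hn⟩) ⁻¹' {v}) := by
    have hunion : (fun ω => prm n ω ⟨0, hn⟩) ⁻¹' {v} =
        ⋃ σ ∈ {σ : Equiv.Perm (Fin n) | σ ⟨0, hn⟩ = v}, {ω | prm n ω = σ} := by
      ext ω
      simp
    exact hunion ▸ .biUnion (Set.to_countable _) fun σ _ => hprm n σ
  refine (mul_log_le_shCondEntropy_of_list hmeas hN fun D hD => ?_).trans_eq
    (shCondEntropy_comp_of_injective Fin.val_injective).symm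
  exact ENNReal.toReal_le_of_le_ofReal (by norm_num) <|
    (measure_mem_list_le (hjoint n) D _).trans (hmiss D hD _)

/-- **`r`-state i.i.d. model, perfect anonymity.**  If at least one of the trace lengths
`m n`, `l n` is at most `c * n ^ (2/(r-1) - α)` for some `c, α > 0`, then
`H(Π(1) | W, Y) → ∞` as `n → ∞`, where `Y` is the anonymized version of `X`
(`Y_{Π(u)} = X_u`, i.e. `Y v = X (Π⁻¹ v)`) and `Π` is a uniformly random permutation
independent of the data. -/
theorem r_state_perfect_anonymity
    (r : ℕ) (hr : 2 ≤ r)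
    (f : (Fin (r - 1) → ℝ) → ℝ) (δ₁ δ₂ : ℝ) (hδ₁ : 0 < δ₁)
    (μP : Measure (Fin (r - 1) → ℝ)) [IsProbabilityMeasure μP]
    (hμP : μP = volume.withDensity fun x => ENNReal.ofReal (f x))
    (hf0 : ∀ x ∉ simplexRegion (r - 1), f x = 0)
    (hf : ∀ x ∈ simplexRegion (r - 1), δ₁ < f x ∧ f x < δ₂)
    (m l : ℕ → ℕ) (c α : ℝ) (hc : 0 < c) (hα : 0 < α)
    (hml : (∀ n : ℕ, (m n : ℝ) ≤ c * (n : ℝ) ^ (2 / ((r : ℝ) - 1) - α)) ∨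
           (∀ n : ℕ, (l n : ℝ) ≤ c * (n : ℝ) ^ (2 / ((r : ℝ) - 1) - α)))
    (Ω : ℕ → Type) (mΩ : ∀ n, MeasurableSpace (Ω n))
    (μ : ∀ n, Measure (Ω n)) (hμ : ∀ n, IsProbabilityMeasure (μ n))
    (P : ∀ n, Ω n → Fin n → Fin (r - 1) → ℝ)
    (X : ∀ n, Ω n → Fin n → Fin (m n) → Fin r)
    (W : ∀ n, Ω n → Fin n → Fin (l n) → Fin r)
    (prm : ∀ n, Ω n → Equiv.Perm (Fin n))
    (hP : ∀ n, Measurable (P n)) (hX : ∀ n, Measurable (X n))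
    (hW : ∀ n, Measurable (W n))
    (hprm : ∀ n (σ : Equiv.Perm (Fin n)), MeasurableSet {ω | prm n ω = σ})
    -- `Π` is uniform on the `n!` permutations, independent of `(P, X, W)`, and
    -- `(P, X, W)` has the `r`-state i.i.d. law described above:
    (hjoint : ∀ n (σ : Equiv.Perm (Fin n))
        (s : Set ((Fin n → Fin (r - 1) → ℝ) ×
          (Fin n → Fin (m n) → Fin r) × (Fin n → Fin (l n) → Fin r))),
        MeasurableSet s →
        μ n {ω | prm n ω = σ ∧ (P n ω, X n ω, W n ω) ∈ s} =
          ((n.factorial : ℝ≥0∞))⁻¹ * rStateLaw n (m n) (l n) r μP s) :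
    Tendsto (fun n =>
        shCondEntropy (μ n)
          (fun ω => if hn : 0 < n then ((prm n ω ⟨0, hn⟩ : Fin n) : ℕ) else 0)
          (fun ω => (W n ω, fun v => X n ω ((prm n ω).symm v))))
      atTop atTop := by
  subst hμP
  have : ∀ n, IsProbabilityMeasure (μ n) := hμ
  exact r_state_perfect_anonymity_general hr (ae_mem_simplexRegion hf0)
    (isLittleO_min_of_le_rpow hα hml) hprm hjoint
end
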